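/- Let G be a locally compact, Hausdorff, étale, principal, σ-compact, ample groupoid with dynamic asymptotic dimension at most d. Then the groupoid homology satisfies H_n(G) = 0 for all n > d, and H_d(G) is torsion-free. -/

import Mathlib

noncomputable section

open Function Set

attribute [local instance] Classical.propDecidable

universe u v w

/-- `ℤ[Y]`: the set of compactly supported continuous `ℤ`-valued functions on a space `Y`
(`ℤ` carries the discrete topology). -/
def ccZ (Y : Type v) [TopologicalSpace Y] : Set (Y → ℤ) :=
  {f | Continuous f ∧ HasCompactSupport f}

/-- `ℤ[Y]` as an additive subgroup of the group of all functions `Y → ℤ`. -/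
def ccZSub (Y : Type v) [TopologicalSpace Y] : AddSubgroup (Y → ℤ) where
  carrier := ccZ Y
  add_mem' {a b} ha hb := ⟨ha.1.add hb.1, ha.2.add hb.2⟩
  zero_mem' := ⟨continuous_const, by
    have h : tsupport (0 : Y → ℤ) = ∅ := by simp [tsupport]
    unfold HasCompactSupport
    rw [h]; exact isCompact_empty⟩
  neg_mem' {a} ha := ⟨ha.1.neg, HasCompactSupport.comp_left (g := fun z : ℤ => -z) ha.2 neg_zero⟩

@[simp] lemma mem_ccZSub {Y : Type v} [TopologicalSpace Y] (f : Y → ℤ) :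
    f ∈ ccZSub Y ↔ f ∈ ccZ Y := Iff.rfl

/-- The pushforward `φ_*(a)(y) = ∑_{x ∈ φ⁻¹(y)} a x` of a function along a map. -/
def pushf {X : Type v} {Y : Type w} (φ : X → Y) (a : X → ℤ) : Y → ℤ :=
  fun y => ∑ᶠ x ∈ φ ⁻¹' {y}, a x

/-- The generated equivalence relation. -/
inductive RelGen {α : Sort*} (r : α → α → Prop) : α → α → Prop
  | rel {x y} : r x y → RelGen r x y
  | refl (x) : RelGen r x x
  | symm {x y} : RelGen r x y → RelGen r y x
  | trans {x y z} : RelGen r x y → RelGen r y z → RelGen r x z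

/-- The purely algebraic data of a topological groupoid, with arrow space `G`:
the set of units, source and range maps (valued in units), a (junk-total)
partially defined composition, and inversion. -/
structure GroupoidData (G : Type u) where
  unitSpace : Set G
  source : G → G
  range : G → G
  mul : G → G → G
  inv : G → G

namespace GroupoidData

variable {G : Type u} (D : GroupoidData G)

/-- The product of two subsets of a groupoid. -/
def setMul (A B : Set G) : Set G :=
  {w | ∃ a ∈ A, ∃ b ∈ B, D.source a = D.range b ∧ w = D.mul a b}

/-- A bisection: a subset on which both the source and the range map are injective. -/
def IsBisection (B : Set G) : Prop := Set.InjOn D.source B ∧ Set.InjOn D.range B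

/-- Membership in the subgroupoid generated by a subset `A` of `G`. -/
inductive InSubgroupoid (A : Set G) : G → Prop
  | base {g} : g ∈ A → InSubgroupoid A g
  | inv {g} : InSubgroupoid A g → InSubgroupoid A (D.inv g)
  | mul {g h} : InSubgroupoid A g → InSubgroupoid A h → D.source g = D.range h →
      InSubgroupoid A (D.mul g h)

/-- `G` is a (locally compact, Hausdorff, étale) ample groupoid: all the algebraic groupoid
axioms hold, the structure maps are suitably continuous, the source and range maps are local
homeomorphisms onto the open unit space (étaleness), and the compact open bisections form a
basis for the topology (ampleness). -/
structure IsAmpleGroupoid [TopologicalSpace G] : Prop where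
  t2 : T2Space G
  locallyCompact : LocallyCompactSpace G
  source_mem : ∀ g, D.source g ∈ D.unitSpace
  range_mem : ∀ g, D.range g ∈ D.unitSpace
  source_unit : ∀ x ∈ D.unitSpace, D.source x = x
  range_unit : ∀ x ∈ D.unitSpace, D.range x = x
  source_mul : ∀ g h, D.source g = D.range h → D.source (D.mul g h) = D.source h
  range_mul : ∀ g h, D.source g = D.range h → D.range (D.mul g h) = D.range g
  mul_assoc : ∀ g h k, D.source g = D.range h → D.source h = D.range k →
      D.mul (D.mul g h) k = D.mul g (D.mul h k)
  source_inv : ∀ g, D.source (D.inv g) = D.range g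
  range_inv : ∀ g, D.range (D.inv g) = D.source g
  inv_mul : ∀ g, D.mul (D.inv g) g = D.source g
  mul_inv : ∀ g, D.mul g (D.inv g) = D.range g
  unit_mul : ∀ g, D.mul (D.range g) g = g
  mul_unit : ∀ g, D.mul g (D.source g) = g
  continuous_inv : Continuous D.inv
  continuous_mul : Continuous fun p : {p : G × G // D.source p.1 = D.range p.2} =>
      D.mul p.1.1 p.1.2
  open_unitSpace : IsOpen D.unitSpace
  etale_source : IsLocalHomeomorph D.source
  etale_range : IsLocalHomeomorph D.range
  ample : ∀ g : G, ∀ U : Set G, IsOpen U → g ∈ U →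
      ∃ B : Set G, g ∈ B ∧ B ⊆ U ∧ IsOpen B ∧ IsCompact B ∧ D.IsBisection B

/-- A groupoid is principal if every arrow with equal range and source is a unit. -/
def IsPrincipal : Prop := ∀ g, D.source g = D.range g → g ∈ D.unitSpace

/-- `G` has dynamic asymptotic dimension at most `d`: for every relatively compact open
subset `K` of `G` there are `d+1` open subsets of the unit space covering `r(K) ∪ s(K)` such
that the subgroupoid generated by the elements of `K` with source and range in one of these
sets is relatively compact. -/
def DadLE [TopologicalSpace G] (d : ℕ) : Prop :=
  ∀ K : Set G, IsOpen K → IsCompact (closure K) →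
    ∃ U : Fin (d + 1) → Set G,
      (∀ i, IsOpen (U i) ∧ U i ⊆ D.unitSpace) ∧
      (D.range '' K ∪ D.source '' K ⊆ ⋃ i, U i) ∧
      ∀ i, IsCompact (closure
        {g | D.InSubgroupoid {g ∈ K | D.source g ∈ U i ∧ D.range g ∈ U i} g})

/-! ### Matui's complex computing the Crainic–Moerdijk groupoid homology `H_*(G)` -/

/-- The space `G^(n)` of composable `n`-tuples. -/
def Comps (n : ℕ) : Set (Fin n → G) :=
  {v | ∀ (j : Fin n) (h : (j : ℕ) + 1 < n), D.source (v j) = D.range (v ⟨(j : ℕ) + 1, h⟩)}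

/-- The face maps of Matui's complex on tuples:
`d_0` drops the first entry, `d_{n+1}` drops the last one, and the intermediate
`d_i` compose two consecutive entries. -/
def dface (n : ℕ) (i : Fin (n + 2)) (v : Fin (n + 1) → G) : Fin n → G := fun j =>
  if (j : ℕ) + 1 < (i : ℕ) then v j.castSucc
  else if (j : ℕ) + 1 = (i : ℕ) then D.mul (v j.castSucc) (v j.succ)
  else v j.succ

/-- The spaces of Matui's complex: `G^0` in degree `0`, and `G^(n)` in degree `n ≥ 1`. -/
def MSp : ℕ → Type u
  | 0 => ↥(D.unitSpace)
  | (n + 1) => ↥(D.Comps (n + 1))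

instance [TopologicalSpace G] (n : ℕ) : TopologicalSpace (D.MSp n) := by
  cases n with
  | zero => exact (inferInstance : TopologicalSpace ↥(D.unitSpace))
  | succ n => exact (inferInstance : TopologicalSpace ↥(D.Comps (n + 1)))

/-- The boundary maps of Matui's complex, given by alternating sums of pushforwards
along the face maps (in degree one, `∂₁ = s_* - r_*`). -/
def mBdry : (n : ℕ) → ((D.MSp (n + 1)) → ℤ) → (D.MSp n) → ℤ
  | 0, a => fun u =>
      (∑ᶠ x ∈ {x : ↥(D.Comps 1) | D.source (x.1 0) = u.1}, a x)
        - ∑ᶠ x ∈ {x : ↥(D.Comps 1) | D.range (x.1 0) = u.1}, a x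
  | (n + 1), a => fun y =>
      ∑ i : Fin (n + 3), (-1 : ℤ) ^ (i : ℕ) *
        ∑ᶠ x ∈ {x : ↥(D.Comps (n + 2)) | D.dface (n + 1) i x.1 = y.1}, a x

variable [TopologicalSpace G]

/-- The cycle subgroup of Matui's complex in degree `n`. -/
def mCycles : (n : ℕ) → AddSubgroup ((D.MSp n) → ℤ)
  | 0 => ccZSub (D.MSp 0)
  | (n + 1) => AddSubgroup.closure {a | a ∈ ccZ (D.MSp (n + 1)) ∧ D.mBdry n a = 0}

/-- The boundary subgroup of Matui's complex in degree `n`. -/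
def mBdries (n : ℕ) : AddSubgroup ((D.MSp n) → ℤ) :=
  AddSubgroup.closure {c | ∃ a ∈ ccZ (D.MSp (n + 1)), D.mBdry n a = c}

/-- The groupoid homology `H_n(G)` (Crainic–Moerdijk homology, computed by Matui's complex). -/
def Homology (n : ℕ) : Type u :=
  (D.mCycles n) ⧸ AddSubgroup.comap (D.mCycles n).subtype (D.mBdries n)

instance (n : ℕ) : AddCommGroup (D.Homology n) :=
  QuotientAddGroup.Quotient.addCommGroup _

/-- The homology class of a cycle. -/
def hcls {n : ℕ} (a : (D.MSp n) → ℤ) (ha : a ∈ D.mCycles n) : D.Homology n :=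
  QuotientAddGroup.mk ⟨a, ha⟩

end GroupoidData

/-!
In a principal groupoid a composable `n`-tuple is the same as its `n + 1` vertices, so Matui's
complex becomes a complex of functions on tuples of units. Let `c` be a cycle. Dynamic asymptotic
dimension at most `d` colours the units continuously with `d + 1` colours so that the arrows
occurring in `c` with range and source of the same colour generate a relatively compact
subgroupoid. Such a subgroupoid is compact open, because word lengths in it are bounded, and its
orbits have a continuous choice of representatives `φ`. Thus, on the tuples occurring in `c`,
`φ u` depends on `u` only through its colour.

Alternating over the orderings of a tuple in which its colours increase, and applying `φ`, gives a
chain map `collapse` homotopic to the identity on such tuples. It vanishes on tuples of more than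
`d + 1` units. Hence `c` is a boundary in degrees above `d`. In degree `d`, if `k • c = ∂ b` then
`k • collapse c = ∂ (collapse b) = 0`, so `collapse c = 0` and again `c` is a boundary.
-/

/-! ### Augmented ordered chains -/

namespace OrderedChain

variable {P Q : Type*} {k : ℕ}

/-- The augmented ordered chain group on `k` points: formal integral combinations of `k`-tuples of
points of `P`. A simplex of dimension `k` is a tuple of `k + 1` points; the empty tuple spans the
augmentation. -/
abbrev Chain (P : Type*) (k : ℕ) : Type _ := (Fin k → P) →₀ ℤ

/-- The boundary operator of the augmented ordered chain complex of `P`. -/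
def boundary : Chain P (k + 1) →ₗ[ℤ] Chain P k :=
  Finsupp.linearCombination ℤ fun v =>
    ∑ i : Fin (k + 1), Finsupp.single (v ∘ i.succAbove) ((-1) ^ (i : ℕ))

/-- The join with the apex `p`, which is a contraction of the ordered chain complex. -/
def cone (p : P) : Chain P k →ₗ[ℤ] Chain P (k + 1) :=
  Finsupp.lmapDomain ℤ ℤ fun v => (Fin.cons p v : Fin (k + 1) → P)

lemma boundary_single_one (v : Fin (k + 1) → P) :
    boundary (Finsupp.single v 1) =
      ∑ i : Fin (k + 1), Finsupp.single (v ∘ i.succAbove) ((-1) ^ (i : ℕ)) := by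
  simp [boundary]

lemma cone_single (p : P) (v : Fin k → P) (c : ℤ) :
    cone p (Finsupp.single v c) = Finsupp.single (Fin.cons p v : Fin (k + 1) → P) c :=
  Finsupp.mapDomain_single

lemma map_boundary_single_one {M : Type*} [AddCommGroup M] (f : Chain P k →ₗ[ℤ] M)
    (v : Fin (k + 1) → P) :
    f (boundary (Finsupp.single v 1)) =
      ∑ i : Fin (k + 1), (-1 : ℤ) ^ (i : ℕ) • f (Finsupp.single (v ∘ i.succAbove) 1) := by
  rw [boundary_single_one, map_sum]
  refine Finset.sum_congr rfl fun i _ => ?_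
  rw [← map_smul, Finsupp.smul_single_one]

lemma boundary_cone (p : P) (z : Chain P (k + 1)) :
    boundary (cone p z) = z - cone p (boundary z) := by
  suffices h : boundary ∘ₗ cone p = LinearMap.id - cone p ∘ₗ boundary (k := k) from
    LinearMap.congr_fun h z
  refine Finsupp.lhom_ext' fun v => LinearMap.ext_ring ?_
  have other_face (i : Fin (k + 1)) : (Fin.cons p v : Fin (k + 2) → P) ∘ i.succ.succAbove =
      Fin.cons p (v ∘ i.succAbove) := by
    funext j; cases j using Fin.cases <;> simp
  simp [cone_single, boundary_single_one, Fin.sum_univ_succ (n := k + 1), other_face,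
    pow_succ, sub_eq_add_neg]

lemma boundary_cone_of_isEmpty (p : P) (z : Chain P 0) : boundary (cone p z) = z := by
  suffices h : boundary ∘ₗ cone p = LinearMap.id from LinearMap.congr_fun h z
  refine Finsupp.lhom_ext' fun v => LinearMap.ext_ring ?_
  simp [cone_single, boundary_single_one, Subsingleton.elim _ v]

lemma boundary_boundary (z : Chain P (k + 2)) : boundary (boundary z) = 0 := by
  suffices h : boundary ∘ₗ boundary = (0 : Chain P (k + 2) →ₗ[ℤ] Chain P k) from
    LinearMap.congr_fun h z
  clear z
  refine Finsupp.lhom_ext' fun v => LinearMap.ext_ring ?_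
  simp only [LinearMap.comp_apply, Finsupp.lsingle_apply, LinearMap.zero_apply]
  induction k with
  | zero =>
    rw [← Fin.cons_self_tail v, ← cone_single, boundary_cone, map_sub, boundary_cone_of_isEmpty,
      sub_self]
  | succ k ih =>
    rw [← Fin.cons_self_tail v, ← cone_single, boundary_cone, map_sub, boundary_cone, ih, map_zero,
      sub_zero, sub_self]

lemma boundary_mapDomain (q : P → Q) (z : Chain P (k + 1)) :
    boundary (z.mapDomain (q ∘ ·)) = (boundary z).mapDomain (q ∘ ·) := by
  suffices h : boundary ∘ₗ Finsupp.lmapDomain ℤ ℤ (q ∘ ·) =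
      Finsupp.lmapDomain ℤ ℤ (q ∘ ·) ∘ₗ boundary (k := k) from LinearMap.congr_fun h z
  refine Finsupp.lhom_ext' fun v => LinearMap.ext_ring ?_
  simp [boundary_single_one, Finsupp.mapDomain_single, Function.comp_assoc]

/-! ### Collapsing coloured tuples -/

section Collapse

variable {ι : Type*} [LinearOrder ι]

/-- The colour-sorting operator: a tuple with pairwise distinct colours is sent to the signed
tuple of the `φ`-images of its entries, sorted by colour, and a tuple with a repeated colour to
zero. At most one permutation contributes to the sum. -/
def collapse (col : P → ι) (φ : P → P) : Chain P k →ₗ[ℤ] Chain P k :=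
  Finsupp.linearCombination ℤ fun v =>
    ∑ σ : Equiv.Perm (Fin k),
      if StrictMono (col ∘ v ∘ σ) then Finsupp.single (φ ∘ v ∘ σ) (σ.sign : ℤ) else 0

lemma collapse_single_one (col : P → ι) (φ : P → P) (v : Fin k → P) :
    collapse col φ (Finsupp.single v 1) = ∑ σ : Equiv.Perm (Fin k),
      if StrictMono (col ∘ v ∘ σ) then Finsupp.single (φ ∘ v ∘ σ) (σ.sign : ℤ) else 0 := by
  simp [collapse]

lemma collapse_of_isEmpty (col : P → ι) (φ : P → P) (z : Chain P 0) : collapse col φ z = z := by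
  suffices h : collapse col φ = LinearMap.id from LinearMap.congr_fun h z
  refine Finsupp.lhom_ext' fun v => LinearMap.ext_ring ?_
  simp [collapse_single_one, Subsingleton.strictMono, Subsingleton.elim _ v]

lemma collapse_eq_zero [Fintype ι] (h : Fintype.card ι < k) (col : P → ι) (φ : P → P)
    (z : Chain P k) : collapse col φ z = 0 := by
  suffices h : collapse (k := k) col φ = 0 from LinearMap.congr_fun h z
  refine Finsupp.lhom_ext' fun v => LinearMap.ext_ring ?_
  have not_strictMono (σ : Equiv.Perm (Fin k)) : ¬ StrictMono (col ∘ v ∘ σ) := fun hσ =>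
    h.not_ge (by simpa using Fintype.card_le_of_injective _ hσ.injective)
  simp [collapse_single_one, not_strictMono]

lemma collapse_single_one_eq_mapDomain {col : P → ι} {φ : P → P} {q : ι → P} {v : Fin k → P}
    (hq : ∀ j, q (col (v j)) = φ (v j)) :
    collapse col φ (Finsupp.single v 1) =
      (collapse id id (Finsupp.single (col ∘ v) 1)).mapDomain (q ∘ ·) := by
  have hq' (σ : Equiv.Perm (Fin k)) : q ∘ col ∘ v ∘ σ = φ ∘ v ∘ σ := funext fun j => hq (σ j)
  simp only [collapse_single_one, Finsupp.mapDomain_finsetSum, apply_ite (Finsupp.mapDomain _),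
    Finsupp.mapDomain_single, Finsupp.mapDomain_zero, Function.id_comp, Function.comp_assoc, hq']

lemma eq_one_of_strictMono_comp {J : Fin k → ι} (hJ : StrictMono J) {σ : Equiv.Perm (Fin k)}
    (h : StrictMono (J ∘ σ)) : σ = 1 := by
  have hJσ : J ∘ σ = J ∘ (1 : Equiv.Perm (Fin k)) :=
    Tuple.unique_monotone h.monotone (by simpa using hJ.monotone)
  exact DFunLike.coe_injective (hJ.injective.comp_left hJσ)

lemma collapse_id_single_one_of_strictMono {J : Fin k → ι} (hJ : StrictMono J) :
    collapse id id (Finsupp.single J 1) = Finsupp.single J 1 := by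
  rw [collapse_single_one, Finset.sum_eq_single 1]
  · simp [hJ]
  · exact fun σ _ hσ => if_neg fun h => hσ (eq_one_of_strictMono_comp hJ h)
  · simp

variable [Fintype ι]

/-- `collapse id id` as an alternating map on `ι → ℤ`, identifying the vertex `i` with the
`i`-th basis vector. -/
def collapseAlternating (ι : Type*) [LinearOrder ι] [Fintype ι] (k : ℕ) :
    (ι → ℤ) [⋀^Fin k]→ₗ[ℤ] Chain ι k :=
  MultilinearMap.alternatization <| ∑ I : Fin k → ι with StrictMono I,
    ((MultilinearMap.mkPiAlgebra ℤ (Fin k) ℤ).compLinearMap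
      fun j => LinearMap.proj (I j)).smulRight (Finsupp.single I 1)

lemma collapseAlternating_apply_single (κ : Fin k → ι) :
    collapseAlternating ι k (fun j => Pi.single (κ j) 1) =
      collapse id id (Finsupp.single κ 1) := by
  simp only [collapseAlternating, MultilinearMap.alternatization_apply, collapse_single_one,
    Function.id_comp]
  refine Finset.sum_congr rfl fun σ _ => ?_
  have prod_eq (I : Fin k → ι) :
      ∏ j, (Pi.single (κ (σ j)) (1 : ℤ) : ι → ℤ) (I j) = if I = κ ∘ σ then 1 else 0 := by
    simp [Pi.single_apply, Finset.prod_ite_zero, funext_iff]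
  have sign_smul (z : Chain ι k) : σ.sign • z = (σ.sign : ℤ) • z := rfl
  split_ifs with hσ <;>
    simp [MultilinearMap.domDomCongr_apply, prod_eq, ite_smul, Finset.sum_ite_eq', hσ, sign_smul]

lemma alternatizeUncurryFin_collapseAlternating_apply_single (κ : Fin (k + 1) → ι) :
    AlternatingMap.alternatizeUncurryFin
      ((∑ i : ι, LinearMap.proj (R := ℤ) i).smulRight (collapseAlternating ι k))
      (fun j => Pi.single (κ j) 1) = collapse id id (boundary (Finsupp.single κ 1)) := by
  rw [AlternatingMap.alternatizeUncurryFin_apply, map_boundary_single_one]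
  refine Finset.sum_congr rfl fun i _ => ?_
  have removeNth_eq : i.removeNth (fun j => (Pi.single (κ j) 1 : ι → ℤ)) =
      fun j => Pi.single ((κ ∘ i.succAbove) j) 1 := rfl
  rw [removeNth_eq, ← collapseAlternating_apply_single]
  simp

-- Both sides are alternating in the vertices, so it suffices to compare them on sorted tuples.
lemma boundary_comp_collapseAlternating :
    boundary.compAlternatingMap (collapseAlternating ι (k + 1)) =
      AlternatingMap.alternatizeUncurryFin
        ((∑ i : ι, LinearMap.proj (R := ℤ) i).smulRight (collapseAlternating ι k)) := by
  refine Module.Basis.ext_alternating (Pi.basisFun ℤ ι) fun κ hκ => ?_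
  let σ := Tuple.sort κ
  have sorted : StrictMono (κ ∘ σ) :=
    (Tuple.monotone_sort κ).strictMono_of_injective (hκ.comp σ.injective)
  have unsort : (fun j => Pi.basisFun ℤ ι (κ j)) =
      (fun j => Pi.basisFun ℤ ι ((κ ∘ σ) j)) ∘ (σ⁻¹ : Equiv.Perm _) := by
    funext j; simp
  rw [unsort, AlternatingMap.map_perm, AlternatingMap.map_perm]
  congr 1
  generalize κ ∘ σ = J at sorted
  simp only [Pi.basisFun_apply, LinearMap.compAlternatingMap_apply,
    alternatizeUncurryFin_collapseAlternating_apply_single, collapseAlternating_apply_single,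
    collapse_id_single_one_of_strictMono sorted, map_boundary_single_one,
    collapse_id_single_one_of_strictMono (sorted.comp (Fin.strictMono_succAbove _))]
  simp [boundary_single_one]

omit [Fintype ι] in
lemma boundary_collapse_id [Finite ι] (z : Chain ι (k + 1)) :
    boundary (collapse id id z) = collapse id id (boundary z) := by
  cases nonempty_fintype ι
  suffices h : boundary ∘ₗ collapse id id = collapse id id ∘ₗ boundary (P := ι) (k := k) from
    LinearMap.congr_fun h z
  refine Finsupp.lhom_ext' fun κ => LinearMap.ext_ring ?_
  have h := AlternatingMap.congr_fun (boundary_comp_collapseAlternating (ι := ι) (k := k))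
    fun j => Pi.single (κ j) 1
  rwa [LinearMap.compAlternatingMap_apply, collapseAlternating_apply_single,
    alternatizeUncurryFin_collapseAlternating_apply_single] at h

end Collapse

section Coherent

variable {ι : Type*} {col : P → ι} {φ : P → P}

/-- A tuple is coherent if `φ` takes the same value on any two of its entries that have the same
colour. -/
def IsCoherent (col : P → ι) (φ : P → P) (v : Fin k → P) : Prop :=
  ∀ i j, col (v i) = col (v j) → φ (v i) = φ (v j)

lemma IsCoherent.comp {m : ℕ} {v : Fin k → P} (hv : IsCoherent col φ v) (f : Fin m → Fin k) :
    IsCoherent col φ (v ∘ f) := fun i j => hv (f i) (f j)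

variable [LinearOrder ι]

lemma boundary_collapse_single_one [Finite ι] {v : Fin (k + 1) → P} (hv : IsCoherent col φ v) :
    boundary (collapse col φ (Finsupp.single v 1)) =
      collapse col φ (boundary (Finsupp.single v 1)) := by
  obtain ⟨q, hq⟩ : ∃ q : ι → P, ∀ j, q (col (v j)) = φ (v j) :=
    ⟨Function.extend (col ∘ v) (φ ∘ v) fun _ => v 0,
      Function.FactorsThrough.extend_apply (f := col ∘ v) (fun _ _ => hv _ _) _⟩
  calc boundary (collapse col φ (Finsupp.single v 1))
      = (collapse id id (boundary (Finsupp.single (col ∘ v) 1))).mapDomain (q ∘ ·) := by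
        rw [collapse_single_one_eq_mapDomain hq, boundary_mapDomain, boundary_collapse_id]
    _ = ∑ i : Fin (k + 1), (-1 : ℤ) ^ (i : ℕ) •
          collapse col φ (Finsupp.single (v ∘ i.succAbove) 1) := by
        simp only [map_boundary_single_one, Finsupp.mapDomain_finsetSum, Finsupp.mapDomain_smul,
          collapse_single_one_eq_mapDomain (v := v ∘ Fin.succAbove _) fun _ => hq _,
          Function.comp_assoc]
    _ = collapse col φ (boundary (Finsupp.single v 1)) := (map_boundary_single_one _ v).symm

/-- The operator that applies `A` to a tuple and joins the result with the first entry of the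
tuple. -/
def coneAtFirst {m : ℕ} (A : Chain P (k + 1) →ₗ[ℤ] Chain P m) :
    Chain P (k + 1) →ₗ[ℤ] Chain P (m + 1) :=
  Finsupp.linearCombination ℤ fun v => cone (v 0) (A (Finsupp.single v 1))

lemma coneAtFirst_single_one {m : ℕ} (A : Chain P (k + 1) →ₗ[ℤ] Chain P m)
    (v : Fin (k + 1) → P) :
    coneAtFirst A (Finsupp.single v 1) = cone (v 0) (A (Finsupp.single v 1)) := by
  simp [coneAtFirst]

/-- The chain homotopy from the identity to `collapse`, obtained by coning off the defect at the
first vertex. -/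
def collapseHomotopy (col : P → ι) (φ : P → P) : (k : ℕ) → Chain P k →ₗ[ℤ] Chain P (k + 1)
  | 0 => 0
  | k + 1 => coneAtFirst (LinearMap.id - collapse col φ - collapseHomotopy col φ k ∘ₗ boundary)

lemma boundary_collapseHomotopy_single_one [Finite ι] {v : Fin (k + 1) → P}
    (hv : IsCoherent col φ v) :
    boundary (collapseHomotopy col φ (k + 1) (Finsupp.single v 1)) =
      Finsupp.single v 1 - collapse col φ (Finsupp.single v 1) -
        collapseHomotopy col φ k (boundary (Finsupp.single v 1)) := by
  rw [collapseHomotopy, coneAtFirst_single_one]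
  induction k with
  | zero =>
    simp [collapseHomotopy, boundary_cone, boundary_collapse_single_one hv, collapse_of_isEmpty]
  | succ k ih =>
    have faces : boundary (collapseHomotopy col φ (k + 1) (boundary (Finsupp.single v 1))) =
        boundary (Finsupp.single v 1) - collapse col φ (boundary (Finsupp.single v 1)) := calc
      _ = ∑ i : Fin (k + 2), (-1 : ℤ) ^ (i : ℕ) • boundary
            (collapseHomotopy col φ (k + 1) (Finsupp.single (v ∘ i.succAbove) 1)) :=
        map_boundary_single_one (boundary ∘ₗ collapseHomotopy col φ (k + 1)) v
      _ = ∑ i : Fin (k + 2), (-1 : ℤ) ^ (i : ℕ) •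
            (LinearMap.id - collapse col φ - collapseHomotopy col φ k ∘ₗ boundary :
              Chain P (k + 1) →ₗ[ℤ] Chain P (k + 1)) (Finsupp.single (v ∘ i.succAbove) 1) := by
        refine Finset.sum_congr rfl fun i _ => congrArg _ ?_
        rw [collapseHomotopy, coneAtFirst_single_one, ih (hv.comp _)]
        simp
      _ = boundary (Finsupp.single v 1) - collapse col φ (boundary (Finsupp.single v 1)) := by
        rw [← map_boundary_single_one]
        simp [boundary_boundary]
    simp only [boundary_cone, LinearMap.sub_apply, LinearMap.comp_apply, LinearMap.id_apply,
      map_sub, faces, boundary_collapse_single_one hv]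
    abel

end Coherent

end OrderedChain

/-! ### Kernels acting on functions -/

namespace Kernel

variable {X Y Z : Type*}

/-- The action of the kernel `(x, y) ↦ A (single x 1) y` on functions by summation over `x`. It is
meaningful when `A` has finite fibres over the support of the function, see `FiniteFibersOn`. -/
def act (A : (X →₀ ℤ) →ₗ[ℤ] (Y →₀ ℤ)) (f : X → ℤ) (y : Y) : ℤ :=
  ∑ᶠ x, f x * A (Finsupp.single x 1) y

/-- Every point is hit by only finitely many points of `S` under the kernel `A`. -/
def FiniteFibersOn (A : (X →₀ ℤ) →ₗ[ℤ] (Y →₀ ℤ)) (S : Set X) : Prop :=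
  ∀ y, {x ∈ S | A (Finsupp.single x 1) y ≠ 0}.Finite

variable {A B : (X →₀ ℤ) →ₗ[ℤ] (Y →₀ ℤ)} {f g : X → ℤ}

lemma FiniteFibersOn.finite_support (h : FiniteFibersOn A (support f)) (y : Y) :
    (support fun x => f x * A (Finsupp.single x 1) y).Finite :=
  (h y).subset fun _ hx => ⟨left_ne_zero_of_mul hx, right_ne_zero_of_mul hx⟩

lemma act_zero_left (f : X → ℤ) : act (0 : (X →₀ ℤ) →ₗ[ℤ] (Y →₀ ℤ)) f = 0 := by
  funext y; simp [act]

lemma act_zero (A : (X →₀ ℤ) →ₗ[ℤ] (Y →₀ ℤ)) : act A 0 = 0 := by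
  funext y; simp [act]

lemma act_id (f : X → ℤ) : act LinearMap.id f = f := by
  funext y
  rw [act, finsum_eq_single _ y fun x hx => by simp [hx.symm]]
  simp

lemma act_add (hf : FiniteFibersOn A (support f)) (hg : FiniteFibersOn A (support g)) :
    act A (f + g) = act A f + act A g := by
  funext y
  simp only [act, Pi.add_apply, add_mul]
  exact finsum_add_distrib (hf.finite_support y) (hg.finite_support y)

lemma act_zsmul (A : (X →₀ ℤ) →ₗ[ℤ] (Y →₀ ℤ)) (n : ℤ) (f : X → ℤ) :
    act A (n • f) = n • act A f := by
  funext y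
  simp only [act, Pi.smul_apply, smul_eq_mul, mul_assoc, mul_finsum]

lemma act_sub_left (hA : FiniteFibersOn A (support f)) (hB : FiniteFibersOn B (support f)) :
    act (A - B) f = act A f - act B f := by
  funext y
  simp only [act, LinearMap.sub_apply, Finsupp.sub_apply, Pi.sub_apply, mul_sub]
  exact finsum_sub_distrib (hA.finite_support y) (hB.finite_support y)

lemma act_congr (h : ∀ x ∈ support f, A (Finsupp.single x 1) = B (Finsupp.single x 1)) :
    act A f = act B f := by
  funext y
  refine finsum_congr fun x => ?_
  by_cases hx : f x = 0
  · simp [hx]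
  · rw [h x hx]

lemma map_apply_eq_finsum (B : (Y →₀ ℤ) →ₗ[ℤ] (Z →₀ ℤ)) (c : Y →₀ ℤ) (z : Z) :
    B c z = ∑ᶠ y, c y * B (Finsupp.single y 1) z := by
  have hc : (support fun y => c y * B (Finsupp.single y 1) z) ⊆ c.support := fun y hy => by
    simpa using left_ne_zero_of_mul hy
  rw [finsum_eq_sum_of_support_subset _ hc]
  conv_lhs => rw [← c.sum_single, Finsupp.sum, map_sum, Finsupp.finsetSum_apply]
  refine Finset.sum_congr rfl fun y _ => ?_
  rw [← Finsupp.smul_single_one, map_smul, Finsupp.smul_apply, smul_eq_mul]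

lemma finsum_comm_of_finite (F : X → Y → ℤ) (hF : (support (uncurry F)).Finite) :
    ∑ᶠ x, ∑ᶠ y, F x y = ∑ᶠ y, ∑ᶠ x, F x y := by
  have hF' : (support (uncurry F ∘ Prod.swap)).Finite :=
    hF.preimage Prod.swap_injective.injOn
  calc ∑ᶠ x, ∑ᶠ y, F x y = ∑ᶠ p, uncurry F p := (finsum_curry (uncurry F) hF).symm
    _ = ∑ᶠ p, (uncurry F ∘ Prod.swap) p := (finsum_comp_equiv (Equiv.prodComm Y X)).symm
    _ = ∑ᶠ y, ∑ᶠ x, F x y := finsum_curry _ hF'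

lemma act_comp {B : (Y →₀ ℤ) →ₗ[ℤ] (Z →₀ ℤ)} {S : Set Y} (hA : FiniteFibersOn A (support f))
    (hAS : ∀ x ∈ support f, ∀ y, A (Finsupp.single x 1) y ≠ 0 → y ∈ S)
    (hB : FiniteFibersOn B S) : act (B ∘ₗ A) f = act B (act A f) := by
  funext z
  let F (x : X) (y : Y) : ℤ := f x * A (Finsupp.single x 1) y * B (Finsupp.single y 1) z
  have hF : (support (uncurry F)).Finite := by
    refine ((hB z).biUnion fun y _ => (hA y).image (·, y)).subset fun ⟨x, y⟩ hxy => ?_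
    have hfA := left_ne_zero_of_mul hxy
    have hA₀ := right_ne_zero_of_mul hfA
    have hy : y ∈ S := hAS x (left_ne_zero_of_mul hfA) y hA₀
    exact mem_biUnion (x := y) ⟨hy, right_ne_zero_of_mul hxy⟩
      ⟨x, ⟨left_ne_zero_of_mul hfA, hA₀⟩, rfl⟩
  calc act (B ∘ₗ A) f z = ∑ᶠ x, ∑ᶠ y, F x y := by
        simp only [act, LinearMap.comp_apply, map_apply_eq_finsum B (A _), mul_finsum, F, mul_assoc]
    _ = ∑ᶠ y, ∑ᶠ x, F x y := finsum_comm_of_finite F hF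
    _ = act B (act A f) z := by simp only [act, finsum_mul, F]

end Kernel

/-! ### Compactly supported functions and their pushforwards -/

section Pushforward

open Topology

variable {X : Type v} {Y : Type w} [TopologicalSpace X] [TopologicalSpace Y] {a b : X → ℤ}

lemma isClopen_support_of_mem_ccZ (ha : a ∈ ccZ X) : IsClopen (support a) :=
  (isClopen_discrete {0}ᶜ).preimage ha.1

lemma isCompact_support_of_mem_ccZ (ha : a ∈ ccZ X) : IsCompact (support a) := by
  simpa only [HasCompactSupport, tsupport, (isClopen_support_of_mem_ccZ ha).1.closure_eq]
    using ha.2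

lemma mul_mem_ccZ (ha : a ∈ ccZ X) {c : X → ℤ} (hc : Continuous c) :
    (fun x => a x * c x) ∈ ccZ X :=
  ⟨ha.1.mul hc, ha.2.mul_right⟩

lemma indicator_mem_ccZ (ha : a ∈ ccZ X) {s : Set X} (hs : IsClopen s) :
    s.indicator a ∈ ccZ X := by
  have indicator_eq : s.indicator a = fun x => a x * s.indicator 1 x := by
    funext x; by_cases hx : x ∈ s <;> simp [hx]
  rw [indicator_eq]
  exact mul_mem_ccZ ha (hs.continuous_indicator continuous_const)

lemma ccZ_induction [T2Space X] [PrespectralSpace X] {p : (X → ℤ) → Prop} (zero : p 0)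
    (add : ∀ a ∈ ccZ X, ∀ b ∈ ccZ X, p a → p b → p (a + b))
    (small : ∀ x, ∃ U ∈ 𝓝 x, ∀ a ∈ ccZ X, support a ⊆ U → p a) (ha : a ∈ ccZ X) : p a := by
  suffices h : ∃ B, IsClopen B ∧ support a ⊆ B ∧ ∀ b ∈ ccZ X, support b ⊆ B → p b by
    obtain ⟨B, -, haB, hB⟩ := h
    exact hB a ha haB
  refine (isCompact_support_of_mem_ccZ ha).induction_on
    (p := fun t => ∃ B, IsClopen B ∧ t ⊆ B ∧ ∀ b ∈ ccZ X, support b ⊆ B → p b) ?_ ?_ ?_ ?_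
  · refine ⟨∅, isClopen_empty, subset_rfl, fun b _ hb => ?_⟩
    rwa [support_eq_empty_iff.1 (subset_empty_iff.1 hb)]
  · rintro s t hst ⟨B, hB, htB, hp⟩
    exact ⟨B, hB, hst.trans htB, hp⟩
  · rintro s t ⟨B, hB, hsB, hpB⟩ ⟨C, hC, htC, hpC⟩
    refine ⟨B ∪ C, hB.union hC, union_subset_union hsB htC, fun b hb hbBC => ?_⟩
    rw [← indicator_self_add_compl B b]
    refine add _ (indicator_mem_ccZ hb hB) _ (indicator_mem_ccZ hb hB.compl)
      (hpB _ (indicator_mem_ccZ hb hB) support_indicator_subset)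
      (hpC _ (indicator_mem_ccZ hb hB.compl) ?_)
    rw [support_indicator]
    exact fun x ⟨hxB, hxb⟩ => (hbBC hxb).resolve_left hxB
  · intro x _
    obtain ⟨U, hU, hp⟩ := small x
    obtain ⟨B, ⟨hBo, hBc⟩, hxB, hBU⟩ :=
      PrespectralSpace.isTopologicalBasis.mem_nhds_iff.1 hU
    exact ⟨B, mem_nhdsWithin_of_mem_nhds (hBo.mem_nhds hxB), B, ⟨hBc.isClosed, hBo⟩, subset_rfl,
      fun b hb hbB => hp b hb (hbB.trans hBU)⟩

lemma prespectralSpace_of_isLocalHomeomorph [PrespectralSpace Y] {f : X → Y}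
    (hf : IsLocalHomeomorph f) : PrespectralSpace X := by
  choose e he_mem _ using hf
  let U (x : X) : TopologicalSpace.Opens X := ⟨(e x).source, (e x).open_source⟩
  have (x : X) : PrespectralSpace (U x) := (e x).isOpenEmbedding_restrict.prespectralSpace
  exact PrespectralSpace.of_isOpenCover (U := U)
    (TopologicalSpace.IsOpenCover.mk (by ext x; simpa using ⟨x, he_mem x⟩))

lemma finite_inter_preimage_singleton [T1Space Y] {f : X → Y} (hf : IsLocalHomeomorph f)
    {K : Set X} (hK : IsCompact K) (y : Y) : (K ∩ f ⁻¹' {y}).Finite := by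
  refine (hK.inter_right (isClosed_singleton.preimage hf.continuous)).finite
    (hf.isLocalHomeomorphOn.isDiscrete_of_image ?_)
  exact (subsingleton_singleton.anti (image_subset_iff.2 inter_subset_right)).isDiscrete

lemma pushf_zero {X : Type v} {Y : Type w} (f : X → Y) : pushf f 0 = 0 := by
  funext y; simp [pushf]

lemma pushf_add [T1Space Y] {f : X → Y} (hf : IsLocalHomeomorph f) (ha : a ∈ ccZ X)
    (hb : b ∈ ccZ X) : pushf f (a + b) = pushf f a + pushf f b := by
  have finite_fiber {c : X → ℤ} (hc : c ∈ ccZ X) (y : Y) : (f ⁻¹' {y} ∩ support c).Finite := by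
    rw [inter_comm]
    exact finite_inter_preimage_singleton hf (isCompact_support_of_mem_ccZ hc) y
  exact funext fun y => finsum_mem_add_distrib' (finite_fiber ha y) (finite_fiber hb y)

lemma pushf_eq_indicator (e : OpenPartialHomeomorph X Y) (ha : support a ⊆ e.source) :
    pushf e a = (e '' support a).indicator (a ∘ e.symm) := by
  funext y
  by_cases hy : y ∈ e '' support a
  · rw [indicator_of_mem hy]
    obtain ⟨x, hx, rfl⟩ := hy
    have fiber : e ⁻¹' {e x} ∩ support a = ({x} : Set X) ∩ support a := by
      ext z
      exact and_congr_left fun hz => ⟨fun hzx => e.injOn (ha hz) (ha hx) hzx, congrArg e⟩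
    rw [comp_apply, e.left_inv (ha hx), pushf, ← finsum_mem_inter_support, fiber,
      finsum_mem_inter_support, finsum_mem_singleton]
  · rw [indicator_of_notMem hy]
    refine finsum_mem_eq_zero_of_forall_eq_zero fun x hxy => ?_
    by_contra hx
    exact hy ⟨x, hx, hxy⟩

lemma pushf_mem_ccZ_of_support_subset_source [T2Space Y] (e : OpenPartialHomeomorph X Y)
    (ha : a ∈ ccZ X) (hae : support a ⊆ e.source) : pushf e a ∈ ccZ Y := by
  have image_compact : IsCompact (e '' support a) :=
    (isCompact_support_of_mem_ccZ ha).image_of_continuousOn (e.continuousOn.mono hae)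
  have image_clopen : IsClopen (e '' support a) := ⟨image_compact.isClosed,
    e.isOpen_image_of_subset_source (isClopen_support_of_mem_ccZ ha).2 hae⟩
  rw [pushf_eq_indicator e hae]
  refine ⟨continuous_indicator (by simp [image_clopen.frontier_eq]) ?_,
    HasCompactSupport.intro image_compact fun y hy => indicator_of_notMem hy _⟩
  rw [image_clopen.1.closure_eq]
  exact ha.1.comp_continuousOn
    (e.continuousOn_symm.mono ((image_mono hae).trans e.image_source_eq_target.subset))

lemma pushf_mem_ccZ [T2Space X] [PrespectralSpace X] [T2Space Y] {f : X → Y}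
    (hf : IsLocalHomeomorph f) (ha : a ∈ ccZ X) : pushf f a ∈ ccZ Y := by
  refine ccZ_induction (p := fun a => pushf f a ∈ ccZ Y) ?_ ?_ ?_ ha
  · rw [pushf_zero]
    exact (ccZSub Y).zero_mem
  · intro a ha b hb hfa hfb
    rw [pushf_add hf ha hb]
    exact (ccZSub Y).add_mem hfa hfb
  · intro x
    obtain ⟨e, hx, rfl⟩ := hf x
    exact ⟨e.source, e.open_source.mem_nhds hx, fun a ha hae =>
      pushf_mem_ccZ_of_support_subset_source e ha hae⟩

end Pushforward

/-! ### Units along a composable tuple -/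

section LocalSections

open Topology

variable {X : Type v} {Y : Type w} [TopologicalSpace X] [TopologicalSpace Y] {f : X → Y}

lemma isOpenMap_of_local_sections
    (sections : ∀ x, ∃ V : Set Y, IsOpen V ∧ ∃ hx : f x ∈ V, ∃ s : V → X,
      Continuous s ∧ s ⟨f x, hx⟩ = x ∧ ∀ y, f (s y) = y) : IsOpenMap f := by
  refine isOpenMap_iff_nhds_le.2 fun x => ?_
  obtain ⟨V, hV, hx, s, hs, hsx, hfs⟩ := sections x
  calc 𝓝 (f x) = (𝓝 (⟨f x, hx⟩ : V)).map Subtype.val := by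
        rw [map_nhds_subtype_coe_eq_nhds hx (hV.mem_nhds hx)]
    _ = ((𝓝 (⟨f x, hx⟩ : V)).map s).map f := by
        rw [Filter.map_map]; exact congrArg (Filter.map · _) (funext hfs).symm
    _ ≤ (𝓝 x).map f := Filter.map_mono (hs.tendsto' _ x hsx)

lemma isLocalHomeomorph_of_isLocallyInjective_of_isOpenMap (hf : Continuous f)
    (inj : IsLocallyInjective f) (hopen : IsOpenMap f) : IsLocalHomeomorph f := by
  refine isLocalHomeomorph_iff_isOpenEmbedding_restrict.2 fun x => ?_
  obtain ⟨U, hU, hxU, hfU⟩ := inj x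
  exact ⟨U, hU.mem_nhds hxU, .of_continuous_injective_isOpenMap
    (hf.comp continuous_subtype_val) (injOn_iff_injective.1 hfU) (hopen.domRestrict hU)⟩

end LocalSections

namespace GroupoidData

variable {G : Type u} {D : GroupoidData G} {n m : ℕ}

/-- The `n + 1` units through which a composable `n`-tuple passes: the range of the first arrow
followed by the sources of all arrows.  A unit, seen as a `0`-tuple, passes through itself. -/
def vertices : {n : ℕ} → D.MSp n → Fin (n + 1) → G
  | 0, x => fun _ => x.1
  | _ + 1, x => Fin.cons (D.range (x.1 0)) fun j => D.source (x.1 j)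

lemma source_arrow (x : D.MSp (n + 1)) (j : Fin (n + 1)) :
    D.source (x.1 j) = vertices x j.succ := rfl

lemma range_arrow (x : D.MSp (n + 1)) (j : Fin (n + 1)) :
    D.range (x.1 j) = vertices x j.castSucc := by
  cases j using Fin.cases with
  | zero => rfl
  | succ j => exact (x.2 j.castSucc (by simp)).symm

variable [TopologicalSpace G]

lemma continuous_arrow (j : Fin (n + 1)) : Continuous fun x : D.MSp (n + 1) => x.1 j :=
  (continuous_apply j).comp (continuous_subtype_val (p := (· ∈ D.Comps (n + 1))))

/-- Two fields of units `p`, `q` over a space `X` are linked if there is a continuous field of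
arrows with range `p` and source `q`. -/
def Linked {X : Type v} [TopologicalSpace X] (D : GroupoidData G) (p q : X → G) : Prop :=
  ∃ γ : X → G, Continuous γ ∧ (∀ x, D.range (γ x) = p x) ∧ ∀ x, D.source (γ x) = q x

variable {X : Type v} {Y : Type w} [TopologicalSpace X] [TopologicalSpace Y] {p q t : X → G}

lemma Linked.comp (h : D.Linked p q) {f : Y → X} (hf : Continuous f) :
    D.Linked (p ∘ f) (q ∘ f) := by
  obtain ⟨γ, hγ, hr, hs⟩ := h
  exact ⟨γ ∘ f, hγ.comp hf, fun x => hr (f x), fun x => hs (f x)⟩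

namespace IsAmpleGroupoid

variable (hD : D.IsAmpleGroupoid)

include hD

lemma eq_of_range_eq_of_source_eq (hP : D.IsPrincipal) {g h : G} (hr : D.range g = D.range h)
    (hs : D.source g = D.source h) : g = h := by
  have composable : D.source (D.inv g) = D.range h := by rw [hD.source_inv, hr]
  have unit_mem : D.mul (D.inv g) h ∈ D.unitSpace := by
    apply hP
    rw [hD.source_mul _ _ composable, hD.range_mul _ _ composable, hD.range_inv, hs]
  have inv_mul_eq : D.mul (D.inv g) h = D.source g := by
    rw [← hD.range_unit _ unit_mem, hD.range_mul _ _ composable, hD.range_inv]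
  calc g = D.mul g (D.mul (D.inv g) h) := by rw [inv_mul_eq, hD.mul_unit]
    _ = h := by
      rw [← hD.mul_assoc g _ h (hD.range_inv g).symm composable, hD.mul_inv, hr, hD.unit_mul]

lemma continuous_mul_comp {γ δ : X → G} (hγ : Continuous γ) (hδ : Continuous δ)
    (h : ∀ x, D.source (γ x) = D.range (δ x)) : Continuous fun x => D.mul (γ x) (δ x) :=
  hD.continuous_mul.comp ((hγ.prodMk hδ).subtype_mk h)

lemma linked_refl (hp : Continuous p) (hp' : ∀ x, p x ∈ D.unitSpace) : D.Linked p p :=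
  ⟨p, hp, fun x => hD.range_unit _ (hp' x), fun x => hD.source_unit _ (hp' x)⟩

lemma linked_symm (h : D.Linked p q) : D.Linked q p := by
  obtain ⟨γ, hγ, hr, hs⟩ := h
  exact ⟨fun x => D.inv (γ x), hD.continuous_inv.comp hγ, fun x => (hD.range_inv _).trans (hs x),
    fun x => (hD.source_inv _).trans (hr x)⟩

lemma linked_trans (h : D.Linked p q) (h' : D.Linked q t) : D.Linked p t := by
  obtain ⟨γ, hγ, hr, hs⟩ := h
  obtain ⟨δ, hδ, hr', hs'⟩ := h'
  have composable (x : X) : D.source (γ x) = D.range (δ x) := (hs x).trans (hr' x).symm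
  exact ⟨_, hD.continuous_mul_comp hγ hδ composable,
    fun x => (hD.range_mul _ _ (composable x)).trans (hr x),
    fun x => (hD.source_mul _ _ (composable x)).trans (hs' x)⟩

lemma isLocalHomeomorph_of_linked (hp : IsLocalHomeomorph p) (h : D.Linked p q) :
    IsLocalHomeomorph q := by
  obtain ⟨γ, hγ, hr, hs⟩ := h
  have range_comp : D.range ∘ γ = p := funext hr
  have source_comp : D.source ∘ γ = q := funext hs
  have hγ' : IsLocalHomeomorph γ := .of_comp (range_comp ▸ hp) hD.etale_range hγ
  exact source_comp ▸ hD.etale_source.comp hγ'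

lemma vertices_mem (x : D.MSp n) (i : Fin (n + 1)) : vertices x i ∈ D.unitSpace := by
  cases n with
  | zero => exact x.2
  | succ n => cases i using Fin.cases with
    | zero => exact hD.range_mem _
    | succ i => exact hD.source_mem _

lemma vertices_injective (hP : D.IsPrincipal) : Injective (vertices (D := D) (n := n)) := by
  intro x y h
  cases n with
  | zero => exact Subtype.ext (congrFun h 0)
  | succ n =>
    exact Subtype.ext <| funext fun j => hD.eq_of_range_eq_of_source_eq hP
      (by rw [range_arrow, range_arrow, h]) (by rw [source_arrow, source_arrow, h])

lemma continuous_vertices (i : Fin (n + 1)) : Continuous fun x : D.MSp n => vertices x i := by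
  cases n with
  | zero => exact continuous_subtype_val (p := (· ∈ D.unitSpace))
  | succ n => cases i using Fin.cases with
    | zero => exact hD.etale_range.continuous.comp (continuous_arrow 0)
    | succ i => exact hD.etale_source.continuous.comp (continuous_arrow i)

lemma linked_vertices_zero (i : Fin (n + 1)) :
    D.Linked (fun x : D.MSp n => vertices x 0) (fun x => vertices x i) := by
  have zero_linked : D.Linked (fun x : D.MSp n => vertices x 0) (fun x => vertices x 0) :=
    hD.linked_refl (hD.continuous_vertices 0) fun x => hD.vertices_mem x 0
  cases n with
  | zero => rwa [Fin.fin_one_eq_zero i]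
  | succ n => induction i using Fin.induction with
    | zero => exact zero_linked
    | succ i ih =>
      exact hD.linked_trans ih
        ⟨fun x => x.1 i, continuous_arrow i, fun x => range_arrow x i, fun x => source_arrow x i⟩

lemma exists_continuous_vertices_eq {u : Fin (n + 1) → X → G} (hu : ∀ j, D.Linked p (u j)) :
    ∃ θ : X → D.MSp n, Continuous θ ∧ ∀ x, vertices (θ x) = fun j => u j x := by
  choose γ hγ hr hs using hu
  cases n with
  | zero =>
    have hu0 : Continuous (u 0) := by
      rw [← funext (hs 0)]; exact hD.etale_source.continuous.comp (hγ 0)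
    refine ⟨fun x => ⟨u 0 x, hs 0 x ▸ hD.source_mem _⟩, hu0.subtype_mk _, fun x => ?_⟩
    funext j
    rw [Fin.fin_one_eq_zero j]
    rfl
  | succ n =>
    let g (x : X) (j : Fin (n + 1)) : G := D.mul (D.inv (γ j.castSucc x)) (γ j.succ x)
    have composable (x : X) (j : Fin (n + 1)) :
        D.source (D.inv (γ j.castSucc x)) = D.range (γ j.succ x) := by
      rw [hD.source_inv, hr, hr]
    have range_g (x : X) (j : Fin (n + 1)) : D.range (g x j) = u j.castSucc x := by
      rw [hD.range_mul _ _ (composable x j), hD.range_inv, hs]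
    have source_g (x : X) (j : Fin (n + 1)) : D.source (g x j) = u j.succ x := by
      rw [hD.source_mul _ _ (composable x j), hs]
    refine ⟨fun x => ⟨g x, fun j hj => (source_g x j).trans (range_g x ⟨j + 1, hj⟩).symm⟩,
      Continuous.subtype_mk (continuous_pi fun j => hD.continuous_mul_comp
        (hD.continuous_inv.comp (hγ _)) (hγ _) fun x => composable x j) _, fun x => ?_⟩
    funext j
    cases j using Fin.cases with
    | zero => exact range_g x 0
    | succ j => exact source_g x j

end IsAmpleGroupoid

end GroupoidData

namespace GroupoidData

variable {G : Type u} [TopologicalSpace G] {D : GroupoidData G} {n m : ℕ}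

namespace IsAmpleGroupoid

variable (hD : D.IsAmpleGroupoid)

include hD

lemma exists_spokes (n : ℕ) : ∃ γ : Fin (n + 1) → D.MSp n → G, (∀ j, Continuous (γ j)) ∧
    (∀ j x, D.range (γ j x) = vertices x 0) ∧ ∀ j x, D.source (γ j x) = vertices x j := by
  choose γ hγ hr hs using hD.linked_vertices_zero (n := n)
  exact ⟨γ, hγ, hr, hs⟩

lemma isLocallyInjective_vertices_zero (hP : D.IsPrincipal) :
    IsLocallyInjective fun x : D.MSp n => vertices x 0 := by
  intro x
  obtain ⟨γ, hγ, hr, hs⟩ := hD.exists_spokes n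
  choose U hU hxU hinj using fun j => hD.etale_range.isLocallyInjective (γ j x)
  refine ⟨⋂ j, γ j ⁻¹' U j, isOpen_iInter_of_finite fun j => (hU j).preimage (hγ j),
    mem_iInter.2 hxU, fun y hy z hz hyz => hD.vertices_injective hP (funext fun j => ?_)⟩
  have arrow_eq : γ j y = γ j z :=
    hinj j (mem_iInter.1 hy j) (mem_iInter.1 hz j) ((hr j y).trans (hyz.trans (hr j z).symm))
  rw [← hs, ← hs, arrow_eq]

lemma isOpenMap_vertices_zero (hP : D.IsPrincipal) :
    IsOpenMap fun x : D.MSp n => vertices x 0 := by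
  refine isOpenMap_of_local_sections fun x => ?_
  obtain ⟨γ, -, hr, hs⟩ := hD.exists_spokes n
  choose e he_mem he using fun j => hD.etale_range (γ j x)
  have target_mem (j) : vertices x 0 ∈ (e j).target := by
    rw [← hr j x, he j]
    exact (e j).map_source (he_mem j)
  let V : Set G := ⋂ j, (e j).target
  have symm_linked (j) : D.Linked (Subtype.val : V → G) fun y => D.source ((e j).symm y) :=
    ⟨fun y => (e j).symm y, (e j).continuousOn_symm.comp_continuous continuous_subtype_val
      fun y => mem_iInter.1 y.2 j, fun y => by
        rw [he j]; exact (e j).right_inv (mem_iInter.1 y.2 j), fun _ => rfl⟩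
  have val_linked : D.Linked (Subtype.val : V → G) Subtype.val :=
    hD.linked_trans (symm_linked 0) (hD.linked_symm (symm_linked 0))
  obtain ⟨s, hs_cont, hs_vert⟩ := hD.exists_continuous_vertices_eq (p := (Subtype.val : V → G))
    (u := Fin.cons Subtype.val fun j y => D.source ((e j.succ).symm y))
    (Fin.cases val_linked fun j => symm_linked j.succ)
  refine ⟨V, isOpen_iInter_of_finite fun j => (e j).open_target, mem_iInter.2 target_mem, s,
    hs_cont, hD.vertices_injective hP ?_, fun y => by rw [hs_vert]; rfl⟩
  rw [hs_vert]
  funext j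
  cases j using Fin.cases with
  | zero => rfl
  | succ j =>
    have symm_eq : (e j.succ).symm (vertices x 0) = γ j.succ x := by
      rw [← hr j.succ x, he j.succ, (e j.succ).left_inv (he_mem j.succ)]
    exact (congrArg D.source symm_eq).trans (hs _ x)

lemma isLocalHomeomorph_vertices_zero (hP : D.IsPrincipal) :
    IsLocalHomeomorph fun x : D.MSp n => vertices x 0 :=
  isLocalHomeomorph_of_isLocallyInjective_of_isOpenMap (hD.continuous_vertices 0)
    (hD.isLocallyInjective_vertices_zero hP) (hD.isOpenMap_vertices_zero hP)

lemma isLocalHomeomorph_of_linked_vertices (hP : D.IsPrincipal) {θ : D.MSp n → D.MSp m}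
    (hθ : Continuous θ) (h : D.Linked (fun x => vertices x 0) fun x => vertices (θ x) 0) :
    IsLocalHomeomorph θ :=
  .of_comp (g := fun y => vertices y 0)
    (hD.isLocalHomeomorph_of_linked (hD.isLocalHomeomorph_vertices_zero hP) h)
    (hD.isLocalHomeomorph_vertices_zero hP) hθ

lemma prespectralSpace : PrespectralSpace G :=
  .of_isTopologicalBasis
    (TopologicalSpace.isTopologicalBasis_of_isOpen_of_nhds (s := {B | IsOpen B ∧ IsCompact B})
      (fun _ hB => hB.1) fun g U hg hU =>
        have ⟨B, hgB, hBU, hBo, hBc, _⟩ := hD.ample g U hU hg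
        ⟨B, ⟨hBo, hBc⟩, hgB, hBU⟩)
    fun _ hB => hB.2

lemma t2Space_mSp (n : ℕ) : T2Space (D.MSp n) := by
  have := hD.t2
  cases n with
  | zero => exact inferInstanceAs (T2Space D.unitSpace)
  | succ n => exact inferInstanceAs (T2Space (D.Comps (n + 1)))

lemma prespectralSpace_mSp (hP : D.IsPrincipal) (n : ℕ) : PrespectralSpace (D.MSp n) :=
  have := hD.prespectralSpace
  prespectralSpace_of_isLocalHomeomorph (hD.isLocalHomeomorph_vertices_zero hP)

end IsAmpleGroupoid

end GroupoidData

/-! ### Étale kernels -/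

namespace GroupoidData

open OrderedChain

variable {G : Type u} [TopologicalSpace G] {D : GroupoidData G} {n m l : ℕ}

/-- A kernel on tuples of points is étale if, on the vertices of a composable tuple, it is a finite
sum of tuples of unit fields linked to the first vertex, with continuous coefficients. -/
def IsEtaleKernel (D : GroupoidData G) (A : Chain G (n + 1) →ₗ[ℤ] Chain G (m + 1)) : Prop :=
  ∃ (ι : Type) (_ : Fintype ι) (u : ι → Fin (m + 1) → D.MSp n → G) (c : ι → D.MSp n → ℤ),
    (∀ i j, D.Linked (fun x => vertices x 0) (u i j)) ∧ (∀ i, Continuous (c i)) ∧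
    ∀ x, A (Finsupp.single (vertices x) 1) = ∑ i, Finsupp.single (fun j => u i j x) (c i x)

/-- A colouring of the points together with a retraction of the units along a continuous field of
arrows; the data from which `collapse` is an étale kernel. -/
structure IsColouredRetraction {ι : Type v} [TopologicalSpace ι] (D : GroupoidData G)
    (col : G → ι) (φ : G → G) : Prop where
  continuous_col : Continuous fun x : D.unitSpace => col x
  linked : D.Linked (fun x : D.unitSpace => (x : G)) fun x => φ x

namespace IsEtaleKernel

variable {A B : Chain G (n + 1) →ₗ[ℤ] Chain G (m + 1)}

lemma zero : D.IsEtaleKernel (0 : Chain G (n + 1) →ₗ[ℤ] Chain G (m + 1)) :=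
  ⟨Empty, inferInstance, isEmptyElim, isEmptyElim, isEmptyElim, isEmptyElim, fun x => by simp⟩

lemma sub (hA : D.IsEtaleKernel A) (hB : D.IsEtaleKernel B) : D.IsEtaleKernel (A - B) := by
  obtain ⟨ι, _, u, c, hu, hc, hA⟩ := hA
  obtain ⟨κ, _, u', c', hu', hc', hB⟩ := hB
  refine ⟨ι ⊕ κ, inferInstance, Sum.elim u u', Sum.elim c fun k x => -c' k x, Sum.rec hu hu',
    Sum.rec hc fun k => (hc' k).neg, fun x => ?_⟩
  simp [hA, hB, sub_eq_add_neg]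

end IsEtaleKernel

namespace IsAmpleGroupoid

variable {A : Chain G (n + 1) →ₗ[ℤ] Chain G (m + 1)} (hD : D.IsAmpleGroupoid)

include hD

lemma isEtaleKernel_id : D.IsEtaleKernel (LinearMap.id : Chain G (n + 1) →ₗ[ℤ] _) :=
  ⟨Unit, inferInstance, fun _ j x => vertices x j, fun _ _ => 1,
    fun _ => hD.linked_vertices_zero, fun _ => continuous_const, fun x => by simp⟩

lemma isEtaleKernel_boundary :
    D.IsEtaleKernel (boundary : Chain G (n + 2) →ₗ[ℤ] Chain G (n + 1)) :=
  ⟨Fin (n + 2), inferInstance, fun i j x => vertices x (i.succAbove j), fun i _ => (-1) ^ (i : ℕ),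
    fun i j => hD.linked_vertices_zero (i.succAbove j), fun _ => continuous_const,
    fun x => boundary_single_one (vertices x)⟩

lemma isEtaleKernel_coneAtFirst (hA : D.IsEtaleKernel A) : D.IsEtaleKernel (coneAtFirst A) := by
  obtain ⟨ι, _, u, c, hu, hc, hA⟩ := hA
  refine ⟨ι, inferInstance, fun i => Fin.cons (fun x => vertices x 0) (u i), c,
    fun i => Fin.cases (hD.linked_vertices_zero 0) (hu i), hc, fun x => ?_⟩
  rw [coneAtFirst_single_one, hA, map_sum]
  refine Finset.sum_congr rfl fun i _ => ?_
  rw [cone_single]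
  congr 1
  funext j
  cases j using Fin.cases <;> rfl

lemma isEtaleKernel_collapse {ι : Type v} [LinearOrder ι] [TopologicalSpace ι]
    [DiscreteTopology ι] {col : G → ι} {φ : G → G} (h : D.IsColouredRetraction col φ) :
    D.IsEtaleKernel (collapse col φ : Chain G (n + 1) →ₗ[ℤ] _) := by
  have continuous_vertex (j : Fin (n + 1)) :
      Continuous fun x : D.MSp n => (⟨vertices x j, hD.vertices_mem x j⟩ : D.unitSpace) :=
    (hD.continuous_vertices j).subtype_mk _
  refine ⟨Equiv.Perm (Fin (n + 1)), inferInstance, fun σ j x => φ (vertices x (σ j)),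
    fun σ x => if StrictMono (col ∘ vertices x ∘ σ) then (σ.sign : ℤ) else 0,
    fun σ j => hD.linked_trans (hD.linked_vertices_zero (σ j))
      (h.linked.comp (continuous_vertex (σ j))), fun σ => ?_, fun x => ?_⟩
  · have continuous_colours : Continuous fun (x : D.MSp n) j => col (vertices x (σ j)) :=
      continuous_pi fun j => h.continuous_col.comp (continuous_vertex (σ j))
    exact (continuous_of_discreteTopology
      (f := fun w : Fin (n + 1) → ι => if StrictMono w then (σ.sign : ℤ) else 0)).comp
        continuous_colours
  · rw [collapse_single_one]
    refine Finset.sum_congr rfl fun σ _ => ?_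
    by_cases hσ : StrictMono (col ∘ vertices x ∘ σ)
    · simp only [if_pos hσ]
      rfl
    · simp only [if_neg hσ, Finsupp.single_zero]

lemma exists_forall_map_single_vertices (hP : D.IsPrincipal) (hA : D.IsEtaleKernel A) :
    ∃ (ι : Type) (_ : Fintype ι) (θ : ι → D.MSp n → D.MSp m) (c : ι → D.MSp n → ℤ),
      (∀ i, IsLocalHomeomorph (θ i)) ∧
      (∀ i, D.Linked (fun x => vertices x 0) fun x => vertices (θ i x) 0) ∧
      (∀ i, Continuous (c i)) ∧
      ∀ x, A (Finsupp.single (vertices x) 1) =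
        ∑ i, Finsupp.single (vertices (θ i x)) (c i x) := by
  obtain ⟨ι, _, u, c, hu, hc, hA⟩ := hA
  choose θ hθ_cont hθ using fun i => hD.exists_continuous_vertices_eq (hu i)
  have hθ_linked (i) : D.Linked (fun x => vertices x 0) fun x => vertices (θ i x) 0 := by
    simpa only [hθ i] using hu i 0
  exact ⟨ι, inferInstance, θ, c,
    fun i => hD.isLocalHomeomorph_of_linked_vertices hP (hθ_cont i) (hθ_linked i), hθ_linked, hc,
    fun x => by rw [hA]; exact Finset.sum_congr rfl fun i _ => by rw [hθ i]⟩

lemma isEtaleKernel_comp (hP : D.IsPrincipal) {B : Chain G (m + 1) →ₗ[ℤ] Chain G (l + 1)}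
    (hA : D.IsEtaleKernel A) (hB : D.IsEtaleKernel B) : D.IsEtaleKernel (B ∘ₗ A) := by
  obtain ⟨ι, _, θ, c, hθ, hθ_linked, hc, hA⟩ := hD.exists_forall_map_single_vertices hP hA
  obtain ⟨κ, _, u, c', hu, hc', hB⟩ := hB
  refine ⟨ι × κ, inferInstance, fun p j x => u p.2 j (θ p.1 x),
    fun p x => c p.1 x * c' p.2 (θ p.1 x),
    fun p j => hD.linked_trans (hθ_linked p.1) ((hu p.2 j).comp (hθ p.1).continuous),
    fun p => (hc p.1).mul ((hc' p.2).comp (hθ p.1).continuous), fun x => ?_⟩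
  have map_single (i) : B (Finsupp.single (vertices (θ i x)) (c i x)) =
      ∑ k, Finsupp.single (fun j => u k j (θ i x)) (c i x * c' k (θ i x)) := by
    rw [← mul_one (c i x), ← smul_eq_mul, ← Finsupp.smul_single, map_smul, hB, Finset.smul_sum]
    simp
  rw [LinearMap.comp_apply, hA, map_sum, Fintype.sum_prod_type]
  exact Finset.sum_congr rfl fun i _ => map_single i

section

variable (hP : D.IsPrincipal) {ι : Type v} [LinearOrder ι] [TopologicalSpace ι]
  [DiscreteTopology ι] {col : G → ι} {φ : G → G} (h : D.IsColouredRetraction col φ) (n : ℕ)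

include hP h

lemma isEtaleKernel_collapseHomotopy_comp_boundary :
    D.IsEtaleKernel (collapseHomotopy col φ n ∘ₗ boundary : _ →ₗ[ℤ] Chain G (n + 1)) := by
  induction n with
  | zero => simpa only [collapseHomotopy, LinearMap.zero_comp] using IsEtaleKernel.zero
  | succ n ih =>
    exact hD.isEtaleKernel_comp hP hD.isEtaleKernel_boundary (hD.isEtaleKernel_coneAtFirst
      ((hD.isEtaleKernel_id.sub (hD.isEtaleKernel_collapse h)).sub ih))

lemma isEtaleKernel_collapseHomotopy : D.IsEtaleKernel (collapseHomotopy col φ (n + 1)) :=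
  hD.isEtaleKernel_coneAtFirst ((hD.isEtaleKernel_id.sub (hD.isEtaleKernel_collapse h)).sub
    (hD.isEtaleKernel_collapseHomotopy_comp_boundary hP h n))

end

end IsAmpleGroupoid

end GroupoidData

namespace GroupoidData

open OrderedChain Kernel

variable {G : Type u} {D : GroupoidData G} {n m l : ℕ}

/-- The function `a` on composable tuples, as a function on tuples of points; in a principal
groupoid a composable tuple is determined by its vertices.  Tuples of points which are not the
vertices of a composable tuple are given the value `0`. -/
def onVertices (a : D.MSp n → ℤ) : (Fin (n + 1) → G) → ℤ := Function.extend vertices a 0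

lemma onVertices_of_notMem_range (a : D.MSp n → ℤ) {v : Fin (n + 1) → G}
    (hv : v ∉ Set.range (vertices (D := D))) : onVertices a v = 0 :=
  Function.extend_apply' _ _ _ hv

lemma onVertices_add (a b : D.MSp n → ℤ) : onVertices (a + b) = onVertices a + onVertices b := by
  rw [onVertices, onVertices, onVertices, ← Function.extend_add, add_zero]

lemma onVertices_zsmul (k : ℤ) (a : D.MSp n → ℤ) : onVertices (k • a) = k • onVertices a := by
  rw [onVertices, onVertices, ← Function.extend_smul, smul_zero]

lemma onVertices_zero : onVertices (0 : D.MSp n → ℤ) = 0 := Function.extend_zero _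

lemma support_onVertices_subset (a : D.MSp n → ℤ) :
    support (onVertices a) ⊆ vertices '' support a := by
  intro v hv
  by_contra h
  rw [onVertices, mem_support, Function.extend_def] at hv
  split_ifs at hv with hv'
  · exact h ⟨_, hv, hv'.choose_spec⟩
  · exact hv rfl

variable [TopologicalSpace G]

namespace IsAmpleGroupoid

variable {A : Chain G (n + 1) →ₗ[ℤ] Chain G (m + 1)} {a : D.MSp n → ℤ}
variable (hD : D.IsAmpleGroupoid) (hP : D.IsPrincipal)

include hD hP

lemma onVertices_vertices (a : D.MSp n → ℤ) (x : D.MSp n) : onVertices a (vertices x) = a x :=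
  (hD.vertices_injective hP).extend_apply a 0 x

lemma onVertices_injective : Injective (onVertices (D := D) (n := n)) := fun a b h =>
  funext fun x => by rw [← hD.onVertices_vertices hP a, h, hD.onVertices_vertices hP]

lemma finiteFibersOn_image_vertices (hA : D.IsEtaleKernel A) {K : Set (D.MSp n)}
    (hK : IsCompact K) : FiniteFibersOn A (vertices '' K) := by
  have := hD.t2Space_mSp m
  obtain ⟨ι, _, θ, c, hθ, -, -, hA⟩ := hD.exists_forall_map_single_vertices hP hA
  intro y
  have fiber_finite (i) : {x ∈ K | vertices (θ i x) = y}.Finite := by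
    by_cases hy : y ∈ Set.range (vertices (D := D))
    · obtain ⟨z, rfl⟩ := hy
      exact (finite_inter_preimage_singleton (hθ i) hK z).subset fun x ⟨hxK, hx⟩ =>
        ⟨hxK, hD.vertices_injective hP hx⟩
    · exact finite_empty.subset fun x hx => hy ⟨θ i x, hx.2⟩
  refine ((finite_iUnion fiber_finite).image vertices).subset ?_
  rintro _ ⟨⟨x, hxK, rfl⟩, hxy⟩
  rw [hA, Finsupp.finsetSum_apply] at hxy
  obtain ⟨i, -, hi⟩ := Finset.exists_ne_zero_of_sum_ne_zero hxy
  exact ⟨x, mem_iUnion.2 ⟨i, hxK, (Finsupp.single_apply_ne_zero.1 hi).1.symm⟩, rfl⟩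

lemma finiteFibersOn_support_onVertices (hA : D.IsEtaleKernel A) (ha : a ∈ ccZ (D.MSp n)) :
    FiniteFibersOn A (support (onVertices a)) := fun y =>
  (hD.finiteFibersOn_image_vertices hP hA (isCompact_support_of_mem_ccZ ha) y).subset
    fun _ hx => ⟨support_onVertices_subset a hx.1, hx.2⟩

lemma act_onVertices_comp {B : Chain G (m + 1) →ₗ[ℤ] Chain G (l + 1)} (hA : D.IsEtaleKernel A)
    (hB : D.IsEtaleKernel B) (ha : a ∈ ccZ (D.MSp n)) :
    act (B ∘ₗ A) (onVertices a) = act B (act A (onVertices a)) := by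
  obtain ⟨ι, _, θ, c, hθ, -, -, hA'⟩ := hD.exists_forall_map_single_vertices hP hA
  have image_compact : IsCompact (⋃ i, θ i '' support a) :=
    isCompact_iUnion fun i => (isCompact_support_of_mem_ccZ ha).image (hθ i).continuous
  refine act_comp (hD.finiteFibersOn_support_onVertices hP hA ha) (fun v hv y hy => ?_)
    (hD.finiteFibersOn_image_vertices hP hB image_compact)
  obtain ⟨x, hx, rfl⟩ := support_onVertices_subset a hv
  rw [hA', Finsupp.finsetSum_apply] at hy
  obtain ⟨i, -, hi⟩ := Finset.exists_ne_zero_of_sum_ne_zero hy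
  exact ⟨θ i x, mem_iUnion.2 ⟨i, x, hx, rfl⟩, (Finsupp.single_apply_ne_zero.1 hi).1.symm⟩

lemma act_onVertices_apply (A : Chain G (n + 1) →ₗ[ℤ] Chain G (m + 1)) (a : D.MSp n → ℤ)
    (y : Fin (m + 1) → G) :
    act A (onVertices a) y = ∑ᶠ x, a x * A (Finsupp.single (vertices x) 1) y := by
  have vanish (v) (hv : v ∉ Set.range (vertices (D := D))) :
      onVertices a v * A (Finsupp.single v 1) y = 0 := by
    rw [onVertices_of_notMem_range a hv, zero_mul]
  rw [act, ← finsum_mem_univ, ← finsum_mem_inter_support_eq' _ (Set.range vertices) univ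
    fun v hv => by simpa using not_imp_comm.1 (vanish v) hv,
    finsum_mem_range (hD.vertices_injective hP)]
  exact finsum_congr fun x => by rw [hD.onVertices_vertices hP]

lemma act_onVertices_eq_sum_pushf {ι : Type*} [Fintype ι] {θ : ι → D.MSp n → D.MSp m}
    {c : ι → D.MSp n → ℤ} (hθ : ∀ i, IsLocalHomeomorph (θ i))
    (hA : ∀ x, A (Finsupp.single (vertices x) 1) =
      ∑ i, Finsupp.single (vertices (θ i x)) (c i x)) (ha : a ∈ ccZ (D.MSp n)) :
    act A (onVertices a) = onVertices (∑ i, pushf (θ i) fun x => a x * c i x) := by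
  have := hD.t2Space_mSp m
  funext y
  rw [hD.act_onVertices_apply hP]
  by_cases hy : y ∈ Set.range (vertices (D := D))
  · obtain ⟨z, rfl⟩ := hy
    rw [hD.onVertices_vertices hP, Finset.sum_apply]
    have pushf_apply (i) : pushf (θ i) (fun x => a x * c i x) z =
        ∑ᶠ x, a x * Finsupp.single (vertices (θ i x)) (c i x) (vertices z) := by
      refine finsum_congr fun x => ?_
      simp [finsum_eq_if, Finsupp.single_apply, (hD.vertices_injective hP).eq_iff]
    simp only [pushf_apply]
    rw [← finsum_sum_comm]
    · simp only [hA, Finsupp.finsetSum_apply, Finset.mul_sum]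
    · intro i _
      refine (finite_inter_preimage_singleton (hθ i) (isCompact_support_of_mem_ccZ ha) z).subset
        fun x hx => ⟨left_ne_zero_of_mul hx, ?_⟩
      exact hD.vertices_injective hP
        (Finsupp.single_apply_ne_zero.1 (right_ne_zero_of_mul hx)).1.symm
  · rw [onVertices_of_notMem_range _ hy]
    refine finsum_eq_zero_of_forall_eq_zero fun x => ?_
    have single_apply (i) : Finsupp.single (vertices (θ i x)) (c i x) y = 0 :=
      Finsupp.single_eq_of_ne fun h => hy ⟨θ i x, h.symm⟩
    simp [hA, single_apply]

lemma exists_mem_ccZ_act_onVertices (hA : D.IsEtaleKernel A) (ha : a ∈ ccZ (D.MSp n)) :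
    ∃ b ∈ ccZ (D.MSp m), act A (onVertices a) = onVertices b := by
  have := hD.t2Space_mSp n
  have := hD.t2Space_mSp m
  have := hD.prespectralSpace_mSp hP n
  obtain ⟨ι, _, θ, c, hθ, -, hc, hA⟩ := hD.exists_forall_map_single_vertices hP hA
  exact ⟨_, (ccZSub _).sum_mem fun i _ => pushf_mem_ccZ (hθ i) (mul_mem_ccZ ha (hc i)),
    hD.act_onVertices_eq_sum_pushf hP hθ hA ha⟩

end IsAmpleGroupoid

end GroupoidData

namespace GroupoidData

open OrderedChain Kernel

variable {G : Type u} [TopologicalSpace G] {D : GroupoidData G} {n : ℕ}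

namespace IsAmpleGroupoid

variable (hD : D.IsAmpleGroupoid)

include hD

lemma range_dface_and_source_dface (x : D.MSp (n + 2)) (i : Fin (n + 3)) (j : Fin (n + 1)) :
    D.range (D.dface (n + 1) i x.1 j) = vertices x (i.succAbove j.castSucc) ∧
      D.source (D.dface (n + 1) i x.1 j) = vertices x (i.succAbove j.succ) := by
  have composable : D.source (x.1 j.castSucc) = D.range (x.1 j.succ) := by
    rw [source_arrow, range_arrow, Fin.succ_castSucc]
  unfold dface
  split_ifs with before_i at_i
  · rw [Fin.succAbove_of_castSucc_lt i j.castSucc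
        (by simp only [Fin.lt_def, Fin.val_castSucc]; omega),
      Fin.succAbove_of_castSucc_lt i j.succ
        (by simp only [Fin.lt_def, Fin.val_castSucc, Fin.val_succ]; omega)]
    exact ⟨range_arrow x _, source_arrow x _⟩
  · rw [Fin.succAbove_of_castSucc_lt i j.castSucc
        (by simp only [Fin.lt_def, Fin.val_castSucc]; omega),
      Fin.succAbove_of_le_castSucc i j.succ
        (by simp only [Fin.le_def, Fin.val_castSucc, Fin.val_succ]; omega),
      hD.range_mul _ _ composable, hD.source_mul _ _ composable]
    exact ⟨range_arrow x _, source_arrow x _⟩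
  · rw [Fin.succAbove_of_le_castSucc i j.castSucc
        (by simp only [Fin.le_def, Fin.val_castSucc]; omega),
      Fin.succAbove_of_le_castSucc i j.succ
        (by simp only [Fin.le_def, Fin.val_castSucc, Fin.val_succ]; omega)]
    exact ⟨range_arrow x _, source_arrow x _⟩

lemma dface_eq_iff (hP : D.IsPrincipal) (x : D.MSp (n + 2)) (y : D.MSp (n + 1))
    (i : Fin (n + 3)) :
    D.dface (n + 1) i x.1 = y.1 ↔ vertices x ∘ i.succAbove = vertices y := by
  have ends := hD.range_dface_and_source_dface x i
  constructor <;> intro h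
  · funext k
    cases k using Fin.cases with
    | zero => exact ((ends 0).1.symm.trans (by rw [h]) : _ = D.range (y.1 0))
    | succ j => exact ((ends j).2.symm.trans (by rw [h]) : _ = D.source (y.1 j))
  · funext j
    apply hD.eq_of_range_eq_of_source_eq hP
    · rw [(ends j).1, range_arrow, ← h, comp_apply]
    · rw [(ends j).2, source_arrow, ← h, comp_apply]

lemma mBdry_eq_sum_pushf (hP : D.IsPrincipal) (a : D.MSp (n + 1) → ℤ)
    {θ : Fin (n + 2) → D.MSp (n + 1) → D.MSp n}
    (hθ : ∀ i x, vertices (θ i x) = vertices x ∘ i.succAbove) :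
    D.mBdry n a = ∑ i, pushf (θ i) fun x => a x * (-1) ^ (i : ℕ) := by
  have pushf_apply (i : Fin (n + 2)) (y : D.MSp n) :
      pushf (θ i) (fun x => a x * (-1) ^ (i : ℕ)) y =
        (-1) ^ (i : ℕ) * ∑ᶠ x ∈ {x | vertices x ∘ i.succAbove = vertices y}, a x := by
    have fiber_eq : θ i ⁻¹' {y} = {x | vertices x ∘ i.succAbove = vertices y} := by
      ext x
      rw [mem_ofPred_eq, ← hθ, (hD.vertices_injective hP).eq_iff]
      rfl
    rw [pushf, fiber_eq, finsum_mem_def, finsum_mem_def, ← smul_eq_mul, smul_finsum]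
    refine finsum_congr fun x => ?_
    rw [← indicator_const_smul_apply]
    simp only [smul_eq_mul, mul_comm]
  funext y
  rw [Finset.sum_apply]
  simp only [pushf_apply]
  cases n with
  | zero =>
    have eq_iff (v : Fin 1 → G) : v = vertices y ↔ v 0 = y.1 :=
      ⟨fun h => congrFun h 0, fun h => funext fun i => by rw [Fin.fin_one_eq_zero i, h]; rfl⟩
    rw [Fin.sum_univ_two]
    simp only [eq_iff, Fin.val_zero, pow_zero, one_mul, Fin.val_one, pow_one, neg_mul,
      ← sub_eq_add_neg]
    rfl
  | succ n =>
    simp only [← hD.dface_eq_iff hP]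
    rfl

lemma onVertices_mBdry (hP : D.IsPrincipal) {a : D.MSp (n + 1) → ℤ}
    (ha : a ∈ ccZ (D.MSp (n + 1))) : onVertices (D.mBdry n a) = act boundary (onVertices a) := by
  have face_linked (i : Fin (n + 2)) (j : Fin (n + 1)) :
      D.Linked (fun x : D.MSp (n + 1) => vertices x 0) fun x => vertices x (i.succAbove j) :=
    hD.linked_vertices_zero (i.succAbove j)
  choose θ hθ_cont hθ using fun i => hD.exists_continuous_vertices_eq (face_linked i)
  have hθ_etale (i) : IsLocalHomeomorph (θ i) :=
    hD.isLocalHomeomorph_of_linked_vertices hP (hθ_cont i)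
      (by simpa only [hθ] using face_linked i 0)
  rw [hD.mBdry_eq_sum_pushf hP a hθ]
  refine (hD.act_onVertices_eq_sum_pushf hP hθ_etale (fun x => ?_) ha).symm
  simp only [boundary_single_one, hθ]
  rfl

end IsAmpleGroupoid

end GroupoidData

/-! ### Relatively compact subgroupoids -/

section Counting

variable {X : Type v} {Y : Type w}

lemma exists_forall_encard_fiber_le [TopologicalSpace X] {f : X → Y} (hf : IsLocallyInjective f)
    {K : Set X} (hK : IsCompact K) : ∃ M : ℕ, ∀ y, (K ∩ f ⁻¹' {y}).encard ≤ M := by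
  refine hK.induction_on (p := fun K => ∃ M : ℕ, ∀ y, (K ∩ f ⁻¹' {y}).encard ≤ M) ?_ ?_ ?_ ?_
  · exact ⟨0, by simp⟩
  · rintro s t hst ⟨M, hM⟩
    exact ⟨M, fun y => (encard_le_encard (inter_subset_inter_left _ hst)).trans (hM y)⟩
  · rintro s t ⟨M, hM⟩ ⟨N, hN⟩
    refine ⟨M + N, fun y => ?_⟩
    rw [union_inter_distrib_right, Nat.cast_add]
    exact (encard_union_le _ _).trans (add_le_add (hM y) (hN y))
  · intro x _
    obtain ⟨U, hU, hxU, inj⟩ := hf x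
    refine ⟨U, mem_nhdsWithin_of_mem_nhds (hU.mem_nhds hxU), 1, fun y => encard_le_one_iff.2 ?_⟩
    rintro a b ⟨haU, ha⟩ ⟨hbU, hb⟩
    exact inj haU hbU (ha.trans hb.symm)

lemma eq_of_monotone_of_encard_le {W : ℕ → Set X} (mono : Monotone W)
    (step : ∀ t, W t = W (t + 1) → W (t + 1) = W (t + 2)) {M : ℕ} (bound : ∀ t, (W t).encard ≤ M) :
    W M = W (M + 1) := by
  have finite (t) : (W t).Finite := finite_of_encard_le_coe (bound t)
  have eq_of_ncard_eq {t} (h : (W t).ncard = (W (t + 1)).ncard) : W t = W (t + 1) :=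
    eq_of_subset_of_ncard_le (mono t.le_succ) h.ge (finite _)
  refine eq_of_ncard_eq (Nat.stabilises_of_monotone (f := fun t => (W t).ncard)
    (fun s t hst => ncard_le_ncard (mono hst) (finite t)) (fun t => ?_)
    (fun t ht => congrArg ncard (step t (eq_of_ncard_eq ht))) M.le_succ).symm
  rw [← Nat.cast_le (α := ℕ∞), (finite t).cast_ncard_eq]
  exact bound t

end Counting

namespace GroupoidData

variable {G : Type u} {D : GroupoidData G} {K S H : Set G} {t : ℕ}

/-- A set of arrows closed under inversion and composition. -/
structure IsSubgroupoid (D : GroupoidData G) (H : Set G) : Prop where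
  inv_mem : ∀ g ∈ H, D.inv g ∈ H
  mul_mem : ∀ g ∈ H, ∀ h ∈ H, D.source g = D.range h → D.mul g h ∈ H

lemma isSubgroupoid_inSubgroupoid (K : Set G) : D.IsSubgroupoid {g | D.InSubgroupoid K g} where
  inv_mem _ := .inv
  mul_mem _ hg _ hh := .mul hg hh

/-- The composites of at most `t` arrows from `S`, starting at the ranges of arrows in `S`. -/
def words (D : GroupoidData G) (S : Set G) : ℕ → Set G
  | 0 => D.range '' S
  | t + 1 => words D S t ∪ D.setMul (words D S t) S

lemma monotone_words : Monotone (D.words S) := monotone_nat_of_le_succ fun _ => subset_union_left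

variable [TopologicalSpace G]

namespace IsAmpleGroupoid

variable (hD : D.IsAmpleGroupoid)

include hD

lemma range_mem_of_isSubgroupoid (hH : D.IsSubgroupoid H) {g : G} (hg : g ∈ H) : D.range g ∈ H := by
  rw [← hD.mul_inv]
  exact hH.mul_mem g hg _ (hH.inv_mem g hg) (hD.range_inv g).symm

lemma words_subset (hH : D.IsSubgroupoid H) (hS : S ⊆ H) : D.words S t ⊆ H := by
  induction t with
  | zero => exact image_subset_iff.2 fun g hg => hD.range_mem_of_isSubgroupoid hH (hS hg)
  | succ t ih =>
    refine union_subset ih ?_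
    rintro _ ⟨g, hg, h, hh, composable, rfl⟩
    exact hH.mul_mem g (ih hg) h (hS hh) composable

lemma range_and_source_mem_image_range (hKS : ∀ k ∈ K, k ∈ S ∧ D.inv k ∈ S) {h : G}
    (hh : D.InSubgroupoid K h) : D.range h ∈ D.range '' S ∧ D.source h ∈ D.range '' S := by
  induction hh with
  | base hk => exact ⟨⟨_, (hKS _ hk).1, rfl⟩, _, (hKS _ hk).2, hD.range_inv _⟩
  | inv _ ih => rw [hD.range_inv, hD.source_inv]; exact ih.symm
  | mul _ _ h ihk ihl => rw [hD.range_mul _ _ h, hD.source_mul _ _ h]; exact ⟨ihk.1, ihl.2⟩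

lemma isCompact_setMul (hK : IsCompact K) (hS : IsCompact S) : IsCompact (D.setMul K S) := by
  have := hD.t2
  have closed : IsClosed {p : G × G | D.source p.1 = D.range p.2} :=
    isClosed_eq (hD.etale_source.continuous.comp continuous_fst)
      (hD.etale_range.continuous.comp continuous_snd)
  have setMul_eq : D.setMul K S =
      (fun p : {p : G × G // D.source p.1 = D.range p.2} => D.mul p.1.1 p.1.2) ''
        (Subtype.val ⁻¹' K ×ˢ S) := by
    ext w
    constructor
    · rintro ⟨g, hg, h, hh, composable, rfl⟩
      exact ⟨⟨(g, h), composable⟩, ⟨hg, hh⟩, rfl⟩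
    · rintro ⟨⟨⟨g, h⟩, composable⟩, ⟨hg, hh⟩, rfl⟩
      exact ⟨g, hg, h, hh, composable, rfl⟩
  rw [setMul_eq]
  exact (closed.isClosedEmbedding_subtypeVal.isCompact_preimage (hK.prod hS)).image
    hD.continuous_mul

lemma isCompact_words (hS : IsCompact S) : IsCompact (D.words S t) := by
  induction t with
  | zero => exact hS.image hD.etale_range.continuous
  | succ t ih => exact ih.union (hD.isCompact_setMul ih hS)

lemma exists_words_eq_succ {L : Set G} (hL : IsCompact L) (hS : ∀ t, D.words S t ⊆ L) :
    ∃ M, D.words S M = D.words S (M + 1) := by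
  obtain ⟨M, hM⟩ := exists_forall_encard_fiber_le hD.etale_range.isLocallyInjective hL
  refine ⟨M, Set.ext fun g => ?_⟩
  let W (t : ℕ) : Set G := D.words S t ∩ D.range ⁻¹' {D.range g}
  have step (t : ℕ) (h : W t = W (t + 1)) : W (t + 1) = W (t + 2) := by
    refine (inter_subset_inter_left _ (monotone_words (t + 1).le_succ)).antisymm ?_
    rintro _ ⟨hw | ⟨k, hk, s, hs, composable, rfl⟩, hw_range⟩
    · exact ⟨hw, hw_range⟩
    · have hkW : k ∈ W t := by
        rw [h]
        exact ⟨hk, (hD.range_mul k s composable).symm.trans hw_range⟩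
      exact ⟨Or.inr ⟨k, hkW.1, s, hs, composable, rfl⟩, hw_range⟩
  have stable : W M = W (M + 1) :=
    eq_of_monotone_of_encard_le (fun s t hst => inter_subset_inter_left _ (monotone_words hst)) step
      fun t => (encard_le_encard (inter_subset_inter_left _ (hS t))).trans (hM _)
  simpa only [W, mem_inter_iff, mem_preimage, mem_singleton_iff, and_true]
    using Set.ext_iff.1 stable g

variable (hP : D.IsPrincipal)

include hP

lemma isOpen_setMul (hK : IsOpen K) (hS : IsOpen S) : IsOpen (D.setMul K S) := by
  have composable (x : D.MSp 2) : D.source (x.1 0) = D.range (x.1 1) := x.2 0 Nat.one_lt_two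
  have continuous_mul : Continuous fun x : D.MSp 2 => D.mul (x.1 0) (x.1 1) :=
    hD.continuous_mul_comp (continuous_arrow 0) (continuous_arrow 1) composable
  have range_comp : D.range ∘ (fun x : D.MSp 2 => D.mul (x.1 0) (x.1 1)) =
      fun x => vertices x 0 := funext fun x => hD.range_mul _ _ (composable x)
  have mul_etale : IsLocalHomeomorph fun x : D.MSp 2 => D.mul (x.1 0) (x.1 1) :=
    .of_comp (range_comp ▸ hD.isLocalHomeomorph_vertices_zero hP) hD.etale_range continuous_mul
  have setMul_eq : D.setMul K S =
      (fun x : D.MSp 2 => D.mul (x.1 0) (x.1 1)) '' {x | x.1 0 ∈ K ∧ x.1 1 ∈ S} := by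
    ext w
    constructor
    · rintro ⟨g, hg, h, hh, hgh, rfl⟩
      exact ⟨⟨![g, h], by
        intro j hj
        obtain rfl : j = 0 := Fin.ext (Nat.lt_one_iff.1 (Nat.lt_of_succ_lt_succ hj))
        exact hgh⟩, ⟨hg, hh⟩, rfl⟩
    · rintro ⟨x, ⟨hg, hh⟩, rfl⟩
      exact ⟨_, hg, _, hh, composable x, rfl⟩
  rw [setMul_eq]
  exact mul_etale.isOpenMap _
    ((hK.preimage (continuous_arrow 0)).inter (hS.preimage (continuous_arrow 1)))

lemma isOpen_words (hS : IsOpen S) : IsOpen (D.words S t) := by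
  induction t with
  | zero => exact hD.etale_range.isOpenMap S hS
  | succ t ih => exact ih.union (hD.isOpen_setMul hP ih hS)

lemma inv_inv (g : G) : D.inv (D.inv g) = g :=
  hD.eq_of_range_eq_of_source_eq hP (by rw [hD.range_inv, hD.source_inv])
    (by rw [hD.source_inv, hD.range_inv])

lemma mul_inv_rev {g h : G} (composable : D.source g = D.range h) :
    D.inv (D.mul g h) = D.mul (D.inv h) (D.inv g) := by
  have composable' : D.source (D.inv h) = D.range (D.inv g) := by
    rw [hD.source_inv, hD.range_inv, composable]
  apply hD.eq_of_range_eq_of_source_eq hP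
  · rw [hD.range_inv, hD.range_mul _ _ composable', hD.range_inv, hD.source_mul _ _ composable]
  · rw [hD.source_inv, hD.source_mul _ _ composable', hD.source_inv, hD.range_mul _ _ composable]

lemma mul_mem_words_of_inSubgroupoid (hKS : ∀ k ∈ K, k ∈ S ∧ D.inv k ∈ S)
    (stable : D.words S t = D.words S (t + 1)) {h : G} (hh : D.InSubgroupoid K h) :
    (∀ g ∈ D.words S t, D.source g = D.range h → D.mul g h ∈ D.words S t) ∧
      ∀ g ∈ D.words S t, D.source g = D.source h → D.mul g (D.inv h) ∈ D.words S t := by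
  have mul_mem {g s : G} (hg : g ∈ D.words S t) (hs : s ∈ S) (composable : D.source g = D.range s) :
      D.mul g s ∈ D.words S t := by
    rw [stable]
    exact Or.inr ⟨g, hg, s, hs, composable, rfl⟩
  induction hh with
  | base hk =>
    exact ⟨fun g hg => mul_mem hg (hKS _ hk).1,
      fun g hg h => mul_mem hg (hKS _ hk).2 (h.trans (hD.range_inv _).symm)⟩
  | inv _ ih =>
    rw [hD.range_inv, hD.source_inv, hD.inv_inv hP]
    exact ih.symm
  | @mul k l _ _ hkl ihk ihl =>
    have hlk : D.source (D.inv l) = D.range (D.inv k) := by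
      rw [hD.source_inv, hD.range_inv, hkl]
    rw [hD.range_mul k l hkl, hD.source_mul k l hkl, hD.mul_inv_rev hP hkl]
    refine ⟨fun g hg hgk => ?_, fun g hg hgl => ?_⟩
    · rw [← hD.mul_assoc g k l hgk hkl]
      exact ihl.1 _ (ihk.1 g hg hgk) ((hD.source_mul g k hgk).trans hkl)
    · have hgl' : D.source g = D.range (D.inv l) := hgl.trans (hD.range_inv l).symm
      rw [← hD.mul_assoc g _ _ hgl' hlk]
      refine ihk.2 _ (ihl.2 g hg hgl) ?_
      rw [hD.source_mul _ _ hgl', hD.source_inv, hkl]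

lemma isCompact_and_isOpen_inSubgroupoid (hK : IsCompact K) (hK_open : IsOpen K)
    (hL : IsCompact (closure {g | D.InSubgroupoid K g})) :
    IsCompact {g | D.InSubgroupoid K g} ∧ IsOpen {g | D.InSubgroupoid K g} := by
  let S : Set G := K ∪ D.inv ⁻¹' K
  have generated := isSubgroupoid_inSubgroupoid (D := D) K
  have hS_subset : S ⊆ {g | D.InSubgroupoid K g} := by
    rintro g (hg | hg)
    · exact .base hg
    · exact hD.inv_inv hP g ▸ .inv (.base hg)
  have words_subset (t) : D.words S t ⊆ {g | D.InSubgroupoid K g} :=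
    hD.words_subset generated hS_subset
  obtain ⟨t, stable⟩ := hD.exists_words_eq_succ hL fun t => (words_subset t).trans subset_closure
  have hKS (k) (hk : k ∈ K) : k ∈ S ∧ D.inv k ∈ S :=
    ⟨Or.inl hk, Or.inr (by rwa [mem_preimage, hD.inv_inv hP])⟩
  have eq_words : {g | D.InSubgroupoid K g} = D.words S t := by
    refine Subset.antisymm (fun h hh => ?_) (words_subset t)
    rw [← hD.unit_mul h]
    exact (hD.mul_mem_words_of_inSubgroupoid hP hKS stable hh).1 _
      (monotone_words t.zero_le (hD.range_and_source_mem_image_range hKS hh).1)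
      (hD.source_unit _ (hD.range_mem h))
  have inv_preimage : D.inv ⁻¹' K = D.inv '' K :=
    (Involutive.image_eq_preimage_symm (hD.inv_inv hP) ▸ rfl)
  rw [eq_words]
  exact ⟨hD.isCompact_words (hK.union (inv_preimage ▸ hK.image hD.continuous_inv)),
    hD.isOpen_words hP (hK_open.union (hK_open.preimage hD.continuous_inv))⟩

end IsAmpleGroupoid

end GroupoidData

/-! ### Coloured retractions from dynamic asymptotic dimension -/

section Colouring

variable {X : Type v} [TopologicalSpace X]

lemma continuousOn_invFunOn_of_isOpenMap {Y : Type w} [TopologicalSpace Y] [Nonempty X] {f : X → Y}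
    (hf : IsOpenMap f) {N : Set X} (hN : IsOpen N) (inj : InjOn f N) :
    ContinuousOn (invFunOn f N) (f '' N) := by
  refine continuousOn_iff'.2 fun V hV => ⟨f '' (V ∩ N), hf _ (hV.inter hN), ?_⟩
  ext y
  constructor
  · rintro ⟨hyV, x, hxN, rfl⟩
    rw [mem_preimage, inj.leftInvOn_invFunOn hxN] at hyV
    exact ⟨⟨x, ⟨hyV, hxN⟩, rfl⟩, x, hxN, rfl⟩
  · rintro ⟨⟨x, ⟨hxV, hxN⟩, rfl⟩, hy⟩
    refine ⟨?_, hy⟩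
    rwa [mem_preimage, inj.leftInvOn_invFunOn hxN]

lemma exists_continuous_forall_mem [T2Space X] [PrespectralSpace X] {ι : Type*} [TopologicalSpace ι]
    [Nonempty ι] {U : ι → Set X} (hU : ∀ i, IsOpen (U i)) {Z : Set X} (hZ : IsCompact Z)
    (hZU : Z ⊆ ⋃ i, U i) : ∃ col : X → ι, Continuous col ∧ ∀ x ∈ Z, x ∈ U (col x) := by
  suffices h : ∃ (W : Set X) (col : X → ι), IsClopen W ∧ Z ⊆ W ∧ Continuous col ∧
      ∀ x ∈ W, x ∈ U (col x) by
    obtain ⟨W, col, -, hZW, hcol, hW⟩ := h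
    exact ⟨col, hcol, fun x hx => hW x (hZW hx)⟩
  refine hZ.induction_on (p := fun Z => ∃ (W : Set X) (col : X → ι), IsClopen W ∧ Z ⊆ W ∧
    Continuous col ∧ ∀ x ∈ W, x ∈ U (col x)) ?_ ?_ ?_ ?_
  · exact ⟨∅, fun _ => Classical.arbitrary ι, isClopen_empty, subset_rfl, continuous_const,
      fun x hx => hx.elim⟩
  · rintro s t hst ⟨W, col, hW, htW, h⟩
    exact ⟨W, col, hW, hst.trans htW, h⟩
  · rintro s t ⟨W, col, hW, hsW, hcol, hWU⟩ ⟨W', col', hW', htW', hcol', hWU'⟩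
    refine ⟨W ∪ W', W.piecewise col col', hW.union hW', union_subset_union hsW htW',
      hcol.piecewise (by simp [hW.frontier_eq]) hcol', fun x hx => ?_⟩
    by_cases hxW : x ∈ W
    · simpa only [piecewise_eq_of_mem _ _ _ hxW] using hWU x hxW
    · simpa only [piecewise_eq_of_notMem _ _ _ hxW] using hWU' x (hx.resolve_left hxW)
  · intro x hx
    obtain ⟨i, hi⟩ := mem_iUnion.1 (hZU hx)
    obtain ⟨B, ⟨hB_open, hB_compact⟩, hxB, hBU⟩ :=
      PrespectralSpace.isTopologicalBasis.mem_nhds_iff.1 ((hU i).mem_nhds hi)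
    exact ⟨B, mem_nhdsWithin_of_mem_nhds (hB_open.mem_nhds hxB), B, fun _ => i,
      ⟨hB_compact.isClosed, hB_open⟩, subset_rfl, continuous_const, fun y hy => hBU hy⟩

end Colouring

namespace GroupoidData

open OrderedChain

variable {G : Type u} {D : GroupoidData G} {n m : ℕ} [TopologicalSpace G]
  {H : Set G} {lam : G → ℕ}

/-- The arrows of `H` whose source carries the least label `lam` among the points that `H` links
to it. -/
def minimalArrows (D : GroupoidData G) (H : Set G) (lam : G → ℕ) : Set G :=
  {h ∈ H | ∀ k ∈ H, D.range k = D.source h → lam (D.source h) ≤ lam (D.source k)}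

namespace IsAmpleGroupoid

variable (hD : D.IsAmpleGroupoid)

include hD

lemma isSubgroupoid_union_unitSpace (hH : D.IsSubgroupoid H) :
    D.IsSubgroupoid (H ∪ D.unitSpace) where
  inv_mem := by
    rintro g (hg | hg)
    · exact .inl (hH.inv_mem g hg)
    · have inv_eq : D.inv g = g := by
        rw [← hD.mul_unit (D.inv g), hD.source_inv, hD.range_unit g hg, hD.inv_mul,
          hD.source_unit g hg]
      exact .inr (inv_eq.symm ▸ hg)
  mul_mem := by
    rintro g hg h (hh | hh) composable
    · rcases hg with hg | hg
      · exact .inl (hH.mul_mem g hg h hh composable)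
      · rw [hD.source_unit g hg] at composable
        exact .inl (by rwa [composable, hD.unit_mul])
    · rw [hD.range_unit h hh] at composable
      rwa [← composable, hD.mul_unit]

lemma mul_mem_minimalArrows (hH : D.IsSubgroupoid H) {g h : G} (hg : g ∈ H)
    (hh : h ∈ D.minimalArrows H lam) (composable : D.source g = D.range h) :
    D.mul g h ∈ D.minimalArrows H lam := by
  refine ⟨hH.mul_mem g hg h hh.1 composable, ?_⟩
  rw [hD.source_mul g h composable]
  exact hh.2

lemma exists_mem_minimalArrows_range_eq (hH : D.IsSubgroupoid H) {g : G} (hg : g ∈ H) :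
    ∃ h ∈ D.minimalArrows H lam, D.range h = D.range g := by
  obtain ⟨h, ⟨hh, range_eq⟩, hmin⟩ := exists_minimalFor_of_wellFoundedLT
    (fun h => h ∈ H ∧ D.range h = D.range g) (lam ∘ D.source) ⟨g, hg, rfl⟩
  refine ⟨h, ⟨hh, fun k hk hkh => ?_⟩, range_eq⟩
  have composite_mem : D.mul h k ∈ H ∧ D.range (D.mul h k) = D.range g :=
    ⟨hH.mul_mem h hh k hk hkh.symm, (hD.range_mul h k hkh.symm).trans range_eq⟩
  rw [← hD.source_mul h k hkh.symm]
  exact (le_total _ _).elim id (hmin composite_mem)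

lemma isOpen_minimalArrows (hH : IsCompact H) (hH_open : IsOpen H) (hlam : Continuous lam) :
    IsOpen (D.minimalArrows (H ∪ D.unitSpace) lam) := by
  have := hD.t2
  have descending : IsClosed {g | lam (D.source g) < lam (D.range g)} :=
    (isClosed_discrete {q : ℕ × ℕ | q.1 < q.2}).preimage
      ((hlam.comp hD.etale_source.continuous).prodMk (hlam.comp hD.etale_range.continuous))
  have eq_inter : D.minimalArrows (H ∪ D.unitSpace) lam = (H ∪ D.unitSpace) ∩
      D.source ⁻¹' (D.range '' (H ∩ {g | lam (D.source g) < lam (D.range g)}))ᶜ := by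
    ext h
    refine and_congr_right fun _ => ⟨?_, fun hmin k hk hkh => ?_⟩
    · rintro hmin ⟨k, ⟨hk, hlt⟩, hkh⟩
      exact (hmin k (.inl hk) hkh).not_gt (hkh ▸ hlt)
    · rcases hk with hk | hk
      · exact le_of_not_gt fun hlt => hmin ⟨k, ⟨hk, by rwa [mem_ofPred_eq, hkh]⟩, hkh⟩
      · rw [← hkh, hD.range_unit k hk, hD.source_unit k hk]
  rw [eq_inter]
  exact (hH_open.union hD.open_unitSpace).inter
    (((hH.inter_right descending).image hD.etale_range.continuous).isClosed.isOpen_compl.preimage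
      hD.etale_source.continuous)

lemma inSubgroupoid_of_monochromatic {ι : Type v} {K : Set G} {U : ι → Set G} {col : G → ι}
    (hcol : ∀ x ∈ D.range '' K ∪ D.source '' K, x ∈ U (col x)) {g : G}
    (hg : D.InSubgroupoid (K ∩ {g | col (D.range g) = col (D.source g)}) g) :
    ∃ i, D.InSubgroupoid {g ∈ K | D.source g ∈ U i ∧ D.range g ∈ U i} g ∧
      col (D.range g) = i ∧ col (D.source g) = i := by
  induction hg with
  | @base g hg =>
    have range_mem := hcol _ (.inl ⟨g, hg.1, rfl⟩)
    have source_mem := hcol _ (.inr ⟨g, hg.1, rfl⟩)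
    rw [← show col (D.range g) = col (D.source g) from hg.2] at source_mem
    exact ⟨col (D.range g), .base ⟨hg.1, source_mem, range_mem⟩, rfl, hg.2.symm⟩
  | inv _ ih =>
    obtain ⟨i, hi, hr, hs⟩ := ih
    exact ⟨i, hi.inv, by rwa [hD.range_inv], by rwa [hD.source_inv]⟩
  | mul _ _ composable ih ih' =>
    obtain ⟨i, hi, hr, hs⟩ := ih
    obtain ⟨j, hj, hr', hs'⟩ := ih'
    obtain rfl : i = j := by rw [← hs, ← hr', composable]
    exact ⟨i, hi.mul hj composable, by rwa [hD.range_mul _ _ composable],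
      by rwa [hD.source_mul _ _ composable]⟩

lemma exists_isCompact_linking_vertices {K : Set (D.MSp n)} (hK : IsCompact K) :
    ∃ C : Set G, IsCompact C ∧ ∀ x ∈ K, ∀ i j,
      ∃ g ∈ C, D.range g = vertices x i ∧ D.source g = vertices x j := by
  have linked (q : Fin (n + 1) × Fin (n + 1)) :
      D.Linked (fun x : D.MSp n => vertices x q.1) fun x => vertices x q.2 :=
    hD.linked_trans (hD.linked_symm (hD.linked_vertices_zero q.1)) (hD.linked_vertices_zero q.2)
  choose γ hγ hr hs using linked
  exact ⟨⋃ q, γ q '' K, isCompact_iUnion fun q => hK.image (hγ q), fun x hx i j =>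
    ⟨γ (i, j) x, mem_iUnion.2 ⟨(i, j), x, hx, rfl⟩, hr _ x, hs _ x⟩⟩

variable (hP : D.IsPrincipal)

include hP

lemma exists_continuous_range_ne_source {L : Set G} (hL : IsCompact L) :
    ∃ lam : G → ℕ, Continuous lam ∧
      ∀ h ∈ L, lam (D.range h) = lam (D.source h) → D.range h = D.source h := by
  have := hD.t2
  refine hL.induction_on (p := fun L => ∃ lam : G → ℕ, Continuous lam ∧
    ∀ h ∈ L, lam (D.range h) = lam (D.source h) → D.range h = D.source h) ?_ ?_ ?_ ?_
  · exact ⟨0, continuous_const, fun h hh => hh.elim⟩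
  · rintro s t hst ⟨lam, hlam, sep⟩
    exact ⟨lam, hlam, fun h hh => sep h (hst hh)⟩
  · rintro s t ⟨lam, hlam, sep⟩ ⟨lam', hlam', sep'⟩
    refine ⟨fun x => Nat.pair (lam x) (lam' x),
      (continuous_of_discreteTopology (f := Nat.pair.uncurry)).comp (hlam.prodMk hlam'), ?_⟩
    rintro h (hh | hh) heq
    · exact sep h hh (Nat.pair_eq_pair.1 heq).1
    · exact sep' h hh (Nat.pair_eq_pair.1 heq).2
  · intro h _
    by_cases heq : D.range h = D.source h
    · refine ⟨D.unitSpace, mem_nhdsWithin_of_mem_nhds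
        (hD.open_unitSpace.mem_nhds (hP h heq.symm)), 0, continuous_const, fun g hg _ => ?_⟩
      rw [hD.range_unit g hg, hD.source_unit g hg]
    · obtain ⟨B, hrB, hB, hB_open, hB_compact, -⟩ :=
        hD.ample (D.range h) {D.source h}ᶜ isOpen_compl_singleton heq
      have hB_clopen : IsClopen B := ⟨hB_compact.isClosed, hB_open⟩
      refine ⟨D.range ⁻¹' B ∩ D.source ⁻¹' Bᶜ, mem_nhdsWithin_of_mem_nhds
        (((hB_open.preimage hD.etale_range.continuous).inter
          (hB_clopen.compl.2.preimage hD.etale_source.continuous)).mem_nhds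
            ⟨hrB, fun hs => hB hs rfl⟩),
        B.indicator 1, hB_clopen.continuous_indicator continuous_const, ?_⟩
      rintro g ⟨hr, hs⟩ hlam
      rw [indicator_of_mem (show D.range g ∈ B from hr), indicator_of_notMem hs] at hlam
      exact absurd hlam one_ne_zero

lemma injOn_range_minimalArrows (hH : D.IsSubgroupoid H)
    (sep : ∀ h ∈ H, lam (D.range h) = lam (D.source h) → D.range h = D.source h) :
    InjOn D.range (D.minimalArrows H lam) := by
  intro h hh k hk range_eq
  have inv_mul_mem {h k : G} (hh : h ∈ H) (hk : k ∈ H) (range_eq : D.range h = D.range k) :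
      D.mul (D.inv h) k ∈ H ∧ D.range (D.mul (D.inv h) k) = D.source h ∧
        D.source (D.mul (D.inv h) k) = D.source k := by
    have composable : D.source (D.inv h) = D.range k := (hD.source_inv h).trans range_eq
    exact ⟨hH.mul_mem _ (hH.inv_mem h hh) k hk composable,
      (hD.range_mul _ _ composable).trans (hD.range_inv h), hD.source_mul _ _ composable⟩
  have label_le {h k : G} (hh : h ∈ D.minimalArrows H lam) (hk : k ∈ H)
      (range_eq : D.range h = D.range k) : lam (D.source h) ≤ lam (D.source k) := by
    obtain ⟨mem, hr, hs⟩ := inv_mul_mem hh.1 hk range_eq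
    exact hs ▸ hh.2 _ mem hr
  obtain ⟨mem, hr, hs⟩ := inv_mul_mem hh.1 hk.1 range_eq
  refine hD.eq_of_range_eq_of_source_eq hP range_eq ?_
  rw [← hr, ← hs]
  refine sep _ mem ?_
  rw [hr, hs]
  exact (label_le hh hk.1 range_eq).antisymm (label_le hk hh.1 range_eq.symm)

lemma exists_retraction_of_isSubgroupoid (hH : D.IsSubgroupoid H) (hH_compact : IsCompact H)
    (hH_open : IsOpen H) :
    ∃ φ : G → G, D.Linked (fun x : D.unitSpace => (x : G)) (fun x => φ x) ∧
      ∀ g ∈ H, φ (D.range g) = φ (D.source g) := by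
  rcases isEmpty_or_nonempty G with _ | _
  · exact ⟨id, ⟨isEmptyElim, continuous_of_const isEmptyElim, isEmptyElim, isEmptyElim⟩,
      isEmptyElim⟩
  obtain ⟨lam, hlam, sep⟩ := hD.exists_continuous_range_ne_source hP hH_compact
  let N : Set G := D.minimalArrows (H ∪ D.unitSpace) lam
  let τ : G → G := invFunOn D.range N
  have hH' := hD.isSubgroupoid_union_unitSpace hH
  have inj : InjOn D.range N := hD.injOn_range_minimalArrows hP hH' <| by
    rintro h (hh | hh) label_eq
    · exact sep h hh label_eq
    · rw [hD.range_unit h hh, hD.source_unit h hh]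
  have unit_mem_image {x : G} (hx : x ∈ D.unitSpace) : x ∈ D.range '' N := by
    obtain ⟨h, hh, range_eq⟩ := hD.exists_mem_minimalArrows_range_eq (lam := lam) hH' (.inr hx)
    exact ⟨h, hh, range_eq.trans (hD.range_unit x hx)⟩
  have τ_mem {x : G} (hx : x ∈ D.unitSpace) : τ x ∈ N := invFunOn_mem (unit_mem_image hx)
  have range_τ {x : G} (hx : x ∈ D.unitSpace) : D.range (τ x) = x :=
    invFunOn_eq (unit_mem_image hx)
  have τ_continuous : ContinuousOn τ (D.range '' N) :=
    continuousOn_invFunOn_of_isOpenMap hD.etale_range.isOpenMap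
      (hD.isOpen_minimalArrows hH_compact hH_open hlam) inj
  refine ⟨fun x => D.source (τ x), ⟨fun x => τ x, τ_continuous.comp_continuous
    continuous_subtype_val fun x => unit_mem_image x.2, fun x => range_τ x.2, fun _ => rfl⟩,
    fun g hg => ?_⟩
  have composable : D.source g = D.range (τ (D.source g)) := (range_τ (hD.source_mem g)).symm
  have τ_range : τ (D.range g) = D.mul g (τ (D.source g)) :=
    inj (τ_mem (hD.range_mem g))
      (hD.mul_mem_minimalArrows hH' (.inl hg) (τ_mem (hD.source_mem g)) composable)
      ((range_τ (hD.range_mem g)).trans (hD.range_mul _ _ composable).symm)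
  calc D.source (τ (D.range g)) = D.source (D.mul g (τ (D.source g))) := by rw [τ_range]
    _ = D.source (τ (D.source g)) := hD.source_mul _ _ composable

lemma exists_isColouredRetraction {d : ℕ} (hdad : D.DadLE d) {C : Set G} (hC : IsCompact C) :
    ∃ (col : G → Fin (d + 1)) (φ : G → G), D.IsColouredRetraction col φ ∧
      ∀ g ∈ C, col (D.range g) = col (D.source g) → φ (D.range g) = φ (D.source g) := by
  have := hD.t2
  have := hD.prespectralSpace
  obtain ⟨K, hK, hK_open, hCK, -⟩ :=
    PrespectralSpace.exists_isCompact_and_isOpen_between hC isOpen_univ (subset_univ C)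
  obtain ⟨U, hU, hKU, hU_compact⟩ := hdad K hK_open (hK.isClosed.closure_eq.symm ▸ hK)
  obtain ⟨col, hcol, hcolU⟩ := exists_continuous_forall_mem (fun i => (hU i).1)
    ((hK.image hD.etale_range.continuous).union (hK.image hD.etale_source.continuous)) hKU
  let K' : Set G := K ∩ {g | col (D.range g) = col (D.source g)}
  have monochromatic : IsClopen {g | col (D.range g) = col (D.source g)} :=
    (isClopen_discrete {q : Fin (d + 1) × Fin (d + 1) | q.1 = q.2}).preimage
      ((hcol.comp hD.etale_range.continuous).prodMk (hcol.comp hD.etale_source.continuous))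
  have generated_subset : {g | D.InSubgroupoid K' g} ⊆
      ⋃ i, closure {g | D.InSubgroupoid {g ∈ K | D.source g ∈ U i ∧ D.range g ∈ U i} g} := by
    intro g hg
    obtain ⟨i, hi, -⟩ := hD.inSubgroupoid_of_monochromatic hcolU hg
    exact mem_iUnion.2 ⟨i, subset_closure hi⟩
  have generated := hD.isCompact_and_isOpen_inSubgroupoid hP (hK.inter_right monochromatic.1)
    (hK_open.inter monochromatic.2)
    ((isCompact_iUnion hU_compact).closure_of_subset generated_subset)
  obtain ⟨φ, hφ_linked, hφ⟩ := hD.exists_retraction_of_isSubgroupoid hP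
    (isSubgroupoid_inSubgroupoid K') generated.1 generated.2
  exact ⟨col, φ, ⟨hcol.comp continuous_subtype_val, hφ_linked⟩,
    fun g hg h => hφ g (.base ⟨hCK hg, h⟩)⟩

lemma exists_isColouredRetraction_forall_isCoherent {d : ℕ} (hdad : D.DadLE d)
    {K : Set (D.MSp n)} (hK : IsCompact K) {L : Set (D.MSp m)} (hL : IsCompact L) :
    ∃ (col : G → Fin (d + 1)) (φ : G → G), D.IsColouredRetraction col φ ∧
      (∀ x ∈ K, IsCoherent col φ (vertices x)) ∧ ∀ x ∈ L, IsCoherent col φ (vertices x) := by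
  obtain ⟨C, hC, linkK⟩ := hD.exists_isCompact_linking_vertices hK
  obtain ⟨C', hC', linkL⟩ := hD.exists_isCompact_linking_vertices hL
  obtain ⟨col, φ, hφ, hcol⟩ := hD.exists_isColouredRetraction hP hdad (hC.union hC')
  refine ⟨col, φ, hφ, fun x hx i j => ?_, fun x hx i j => ?_⟩
  · obtain ⟨g, hg, hr, hs⟩ := linkK x hx i j
    exact hr ▸ hs ▸ hcol g (.inl hg)
  · obtain ⟨g, hg, hr, hs⟩ := linkL x hx i j
    exact hr ▸ hs ▸ hcol g (.inr hg)

end IsAmpleGroupoid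

end GroupoidData

/-! ### Homology -/

namespace GroupoidData

open OrderedChain Kernel

variable {G : Type u} [TopologicalSpace G] {D : GroupoidData G} {n : ℕ}

namespace IsAmpleGroupoid

variable (hD : D.IsAmpleGroupoid) (hP : D.IsPrincipal)

/-- The boundary of Matui's complex as a homomorphism on compactly supported functions, where the
sums defining it are finite. -/
def mBdryHom (n : ℕ) : ccZSub (D.MSp (n + 1)) →+ (D.MSp n → ℤ) :=
  AddMonoidHom.mk' (fun a => D.mBdry n a) fun a b => hD.onVertices_injective hP <| by
    have finiteFibers (c : ccZSub (D.MSp (n + 1))) :=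
      hD.finiteFibersOn_support_onVertices hP hD.isEtaleKernel_boundary c.2
    rw [onVertices_add, hD.onVertices_mBdry hP a.2, hD.onVertices_mBdry hP b.2,
      hD.onVertices_mBdry hP (a + b).2, AddSubgroup.coe_add, onVertices_add,
      act_add (finiteFibers a) (finiteFibers b)]

include hD hP

lemma mem_mBdries_iff {c : D.MSp n → ℤ} :
    c ∈ D.mBdries n ↔ ∃ a ∈ ccZ (D.MSp (n + 1)), D.mBdry n a = c := by
  have eq_range : {c | ∃ a ∈ ccZ (D.MSp (n + 1)), D.mBdry n a = c} =
      (hD.mBdryHom hP n).range := by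
    ext c
    exact ⟨fun ⟨a, ha, h⟩ => ⟨⟨a, ha⟩, h⟩, fun ⟨a, h⟩ => ⟨a, a.2, h⟩⟩
  rw [mBdries, eq_range, AddSubgroup.closure_eq, ← SetLike.mem_coe, ← eq_range]
  rfl

lemma mem_mCycles_succ_iff {c : D.MSp (n + 1) → ℤ} :
    c ∈ D.mCycles (n + 1) ↔ c ∈ ccZ (D.MSp (n + 1)) ∧ D.mBdry n c = 0 := by
  have eq_ker : {a | a ∈ ccZ (D.MSp (n + 1)) ∧ D.mBdry n a = 0} =
      (hD.mBdryHom hP n).ker.map (ccZSub _).subtype := by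
    ext c
    exact ⟨fun ⟨hc, h⟩ => ⟨⟨c, hc⟩, h, rfl⟩, fun ⟨a, h, ha⟩ => ha ▸ ⟨a.2, h⟩⟩
  rw [mCycles, eq_ker, AddSubgroup.closure_eq, ← SetLike.mem_coe, ← eq_ker]
  rfl

lemma mem_ccZ_of_mem_mCycles {c : D.MSp n → ℤ} (hc : c ∈ D.mCycles n) : c ∈ ccZ (D.MSp n) := by
  cases n with
  | zero => exact hc
  | succ n => exact ((hD.mem_mCycles_succ_iff hP).1 hc).1

section

variable {ι : Type v} [LinearOrder ι] [TopologicalSpace ι] [DiscreteTopology ι] {col : G → ι}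
  {φ : G → G} (h : D.IsColouredRetraction col φ)

include h

lemma act_collapseHomotopy_comp_boundary_of_mem_mCycles {c : D.MSp n → ℤ}
    (hc : c ∈ D.mCycles n) :
    act (collapseHomotopy col φ n ∘ₗ boundary) (onVertices c) = 0 := by
  cases n with
  | zero => rw [collapseHomotopy, LinearMap.zero_comp, act_zero_left]
  | succ n =>
    obtain ⟨hc, hc_cycle⟩ := (hD.mem_mCycles_succ_iff hP).1 hc
    rw [hD.act_onVertices_comp hP hD.isEtaleKernel_boundary
      (hD.isEtaleKernel_collapseHomotopy hP h n) hc, ← hD.onVertices_mBdry hP hc, hc_cycle,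
      onVertices_zero, act_zero]

variable [Finite ι]

lemma exists_onVertices_mBdry_eq_sub_act_collapse {c : D.MSp n → ℤ} (hc : c ∈ D.mCycles n)
    (coherent : ∀ x ∈ support c, IsCoherent col φ (vertices x)) :
    ∃ b ∈ ccZ (D.MSp (n + 1)),
      onVertices (D.mBdry n b) = onVertices c - act (collapse col φ) (onVertices c) := by
  have hc' := hD.mem_ccZ_of_mem_mCycles hP hc
  have id_sub_collapse := hD.isEtaleKernel_id.sub (hD.isEtaleKernel_collapse h (n := n))
  obtain ⟨b, hb, act_eq⟩ :=
    hD.exists_mem_ccZ_act_onVertices hP (hD.isEtaleKernel_collapseHomotopy hP h n) hc'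
  refine ⟨b, hb, ?_⟩
  have finiteFibers {A : Chain G (n + 1) →ₗ[ℤ] Chain G (n + 1)} (hA : D.IsEtaleKernel A) :=
    hD.finiteFibersOn_support_onVertices hP hA hc'
  calc onVertices (D.mBdry n b)
      = act (boundary ∘ₗ collapseHomotopy col φ (n + 1)) (onVertices c) := by
        rw [hD.onVertices_mBdry hP hb, ← act_eq, hD.act_onVertices_comp hP
          (hD.isEtaleKernel_collapseHomotopy hP h n) hD.isEtaleKernel_boundary hc']
    _ = act (LinearMap.id - collapse col φ - collapseHomotopy col φ n ∘ₗ boundary)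
          (onVertices c) := act_congr fun v hv => by
        obtain ⟨x, hx, rfl⟩ := support_onVertices_subset c hv
        exact boundary_collapseHomotopy_single_one (coherent x hx)
    _ = onVertices c - act (collapse col φ) (onVertices c) := by
        rw [act_sub_left (finiteFibers id_sub_collapse)
            (finiteFibers (hD.isEtaleKernel_collapseHomotopy_comp_boundary hP h n)),
          act_sub_left (finiteFibers hD.isEtaleKernel_id)
            (finiteFibers (hD.isEtaleKernel_collapse h)), act_id,
          hD.act_collapseHomotopy_comp_boundary_of_mem_mCycles hP h hc, sub_zero]

lemma mem_mBdries_of_act_collapse_eq_zero {c : D.MSp n → ℤ} (hc : c ∈ D.mCycles n)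
    (coherent : ∀ x ∈ support c, IsCoherent col φ (vertices x))
    (hc_collapse : act (collapse col φ) (onVertices c) = 0) : c ∈ D.mBdries n := by
  obtain ⟨b, hb, h_eq⟩ := hD.exists_onVertices_mBdry_eq_sub_act_collapse hP h hc coherent
  rw [hc_collapse, sub_zero] at h_eq
  exact (hD.mem_mBdries_iff hP).2 ⟨b, hb, hD.onVertices_injective hP h_eq⟩

lemma act_collapse_onVertices_mBdry {b : D.MSp (n + 1) → ℤ} (hb : b ∈ ccZ (D.MSp (n + 1)))
    (coherent : ∀ x ∈ support b, IsCoherent col φ (vertices x)) :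
    act (collapse col φ) (onVertices (D.mBdry n b)) =
      act (boundary ∘ₗ collapse col φ) (onVertices b) := by
  rw [hD.onVertices_mBdry hP hb, ← hD.act_onVertices_comp hP hD.isEtaleKernel_boundary
    (hD.isEtaleKernel_collapse h) hb]
  refine act_congr fun v hv => ?_
  obtain ⟨x, hx, rfl⟩ := support_onVertices_subset b hv
  exact (boundary_collapse_single_one (coherent x hx)).symm

end

variable {d : ℕ} (hdad : D.DadLE d)

include hdad

lemma mem_mBdries_of_lt (hn : d < n) {c : D.MSp n → ℤ} (hc : c ∈ D.mCycles n) :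
    c ∈ D.mBdries n := by
  have hsupp := isCompact_support_of_mem_ccZ (hD.mem_ccZ_of_mem_mCycles hP hc)
  obtain ⟨col, φ, h, coherent, -⟩ :=
    hD.exists_isColouredRetraction_forall_isCoherent hP hdad hsupp hsupp
  have collapse_zero : collapse (k := n + 1) col φ = 0 :=
    LinearMap.ext (collapse_eq_zero (by simpa using hn) col φ)
  refine hD.mem_mBdries_of_act_collapse_eq_zero hP h hc coherent ?_
  rw [collapse_zero, act_zero_left]

lemma mem_mBdries_of_zsmul_mem {c : D.MSp d → ℤ} (hc : c ∈ D.mCycles d) {k : ℤ} (hk : k ≠ 0)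
    (hkc : k • c ∈ D.mBdries d) : c ∈ D.mBdries d := by
  obtain ⟨b, hb, boundary_b⟩ := (hD.mem_mBdries_iff hP).1 hkc
  obtain ⟨col, φ, h, coherent_c, coherent_b⟩ :=
    hD.exists_isColouredRetraction_forall_isCoherent hP hdad
      (isCompact_support_of_mem_ccZ (hD.mem_ccZ_of_mem_mCycles hP hc))
      (isCompact_support_of_mem_ccZ hb)
  have collapse_zero : collapse (k := d + 2) col φ = 0 :=
    LinearMap.ext (collapse_eq_zero (by simp) col φ)
  refine hD.mem_mBdries_of_act_collapse_eq_zero hP h hc coherent_c ?_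
  refine (smul_eq_zero.1 ?_).resolve_left hk
  calc k • act (collapse col φ) (onVertices c)
      = act (collapse col φ) (onVertices (D.mBdry d b)) := by
        rw [boundary_b, onVertices_zsmul, act_zsmul]
    _ = act (boundary ∘ₗ collapse col φ) (onVertices b) :=
        hD.act_collapse_onVertices_mBdry hP h hb coherent_b
    _ = 0 := by rw [collapse_zero, LinearMap.comp_zero, act_zero_left]

end IsAmpleGroupoid

end GroupoidData

theorem homology_vanishes_above_dad_and_top_torsion_free_general
    {G : Type u} [TopologicalSpace G] (D : GroupoidData G)
    (hAmple : D.IsAmpleGroupoid) (hPrincipal : D.IsPrincipal) (d : ℕ) (hdad : D.DadLE d) :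
    (∀ n, d < n → ∀ x : D.Homology n, x = 0) ∧
      (∀ (x : D.Homology d) (k : ℤ), k ≠ 0 → k • x = 0 → x = 0) := by
  constructor
  · intro n hn x
    obtain ⟨c, rfl⟩ := QuotientAddGroup.mk_surjective x
    exact (QuotientAddGroup.eq_zero_iff c).2 (hAmple.mem_mBdries_of_lt hPrincipal hdad hn c.2)
  · intro x k hk hkx
    obtain ⟨c, rfl⟩ := QuotientAddGroup.mk_surjective x
    exact (QuotientAddGroup.eq_zero_iff c).2 (hAmple.mem_mBdries_of_zsmul_mem hPrincipal hdad c.2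
      hk ((QuotientAddGroup.eq_zero_iff (k • c)).1 hkx))

/-- **Theorem A.**  Let `G` be a locally compact, Hausdorff, étale, principal, σ-compact,
ample groupoid with dynamic asymptotic dimension at most `d`.  Then the groupoid homology
satisfies `H_n(G) = 0` for all `n > d`, and `H_d(G)` is torsion-free. -/
theorem homology_vanishes_above_dad_and_top_torsion_free
    {G : Type u} [TopologicalSpace G] (D : GroupoidData G)
    (hAmple : D.IsAmpleGroupoid) (hPrincipal : D.IsPrincipal)
    (hSigma : SigmaCompactSpace G) (d : ℕ) (hdad : D.DadLE d) :
    (∀ n, d < n → ∀ x : D.Homology n, x = 0) ∧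
      (∀ (x : D.Homology d) (k : ℤ), k ≠ 0 → k • x = 0 → x = 0) :=
  homology_vanishes_above_dad_and_top_torsion_free_general D hAmple hPrincipal d hdad
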